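/- arXiv:1008.4220 — 4 statements merged into one kernel-verified Lean document; each statement's English description precedes it below -/
import Mathlib

section
/- Assume y = Xw* + σε with ε a standard Gaussian vector in ℝ^n and σ > 0. Let Q = (1/n) X^⊤X, let J be the smallest stable set containing Supp(w*), let ν = min{|w*_j| : w*_j ≠ 0} > 0, assume κ = λ_min(Q_{JJ}) > 0, and assume for some η > 0 that (Ω^J)*[ (Ω_J(Q_{JJ}^{−1} Q_{Jj}))_{j∈J^c} ] ≤ 1 − η. Then for any λ ≤ κν/(2 c(J)), the minimizer ŵ of w ↦ (1/(2n))‖y − Xw‖_2² + λΩ(w) is unique and Supp(ŵ) = J, with probability at least 1 − 3 P(Ω*(z) > λ η ρ(J) √n / (2σ)), where z is a centered Gaussian vector in ℝ^p with covariance matrix Q. -/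
/-!
The proof is by a primal-dual witness. Up to an additive constant the objective is
`Phi r w = (w - w*)ᵀ Q (w - w*) / 2 - rᵀ w + λ Ω(w)` with `r = σ Xᵀε / n`.

*Deterministic part.* The Lovász extension is a maximum of linear forms over the greedy points of
`{s ≥ 0 : s(A) ≤ F(A)}` (`exists_omega_eq`, `sum_le_omega`), which makes `Ω` a norm, gives the
splitting of `Ω` into `Ω_J` and `Ω^J` (`omega_decomp`) and the comparison `ρ(J) Ω ≤ Ω^J` on `J^c`
(`rho_mul_omega_le`). Since `Q_JJ` is positive definite, `Phi r` has a unique minimizer `v` among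
vectors supported in `J`. If `Ω_J*(r_J) ≤ λ/2`, each coordinate of `v - w*` is smaller than `ν`, so
`v` does not vanish on `Supp(w*)`. If moreover `(Ω^J)*` of `r - Q Q_JJ⁻¹ r_J` is at most `λη/2`, the
irrepresentability condition makes `v` the unique global minimizer.

*Why the support is all of `J`.* If `Supp(v) ≠ J`, then `Supp(v)` is not stable, because `J` is the
smallest stable set containing `Supp(w*)`. So some `k ∈ J` has `v_k = 0` and can be added to the
support without increasing `F`. Moving `v_k` is then free for `Ω` to first order, so the `k`-th
partial derivative of the quadratic part vanishes at the minimizer over `J \ {k}`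
(`IsMinIn.grad_eq_zero`). The noises for which this happens form a closed set that each line of
direction `X Q_JJ⁻¹ e_k` meets at most once, hence a null set (`Setup.null_exceptional`).

*Probabilistic part.* Both bounds on the noise follow from `Ω*(z), Ω*(z') ≤ λ η ρ(J) √n / (2σ)`,
where `z = Xᵀε / √n` and `z' = (1 - 2 Q Q_JJ⁻¹) z` is its reflection: `r - Q Q_JJ⁻¹ r_J` is the mean
of the two correlations. The reflection preserves `Q` (`Setup.reflection_mul`), so `z` and `z'` are
both centered Gaussian with covariance `Q`, and a union bound over the two events suffices.
-/

open Finset MeasureTheory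
open scoped Classical NNReal

noncomputable section

/-- A set-function on subsets of `α` is submodular:
`F (A ∪ B) + F (A ∩ B) ≤ F A + F B`. -/
def Submodular {α : Type*} [DecidableEq α] (F : Finset α → ℝ) : Prop :=
  ∀ A B : Finset α, F (A ∪ B) + F (A ∩ B) ≤ F A + F B

/-- A set-function is nondecreasing: `A ⊆ B → F A ≤ F B`. -/
def MonotoneF {α : Type*} (F : Finset α → ℝ) : Prop :=
  ∀ ⦃A B : Finset α⦄, A ⊆ B → F A ≤ F B

/-- A set `A` is stable for `F` if enlarging it strictly increases `F`. -/
def StableSet {α : Type*} (F : Finset α → ℝ) (A : Finset α) : Prop :=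
  ∀ B : Finset α, A ⊆ B → A ≠ B → F A < F B

/-- A set `A` is separable for `F` if it can be partitioned into `k ≥ 2` nonempty
disjoint sets on which `F` is additive. -/
def SeparableSet {α : Type*} [DecidableEq α] (F : Finset α → ℝ) (A : Finset α) : Prop :=
  ∃ P : Finset (Finset α), 2 ≤ P.card ∧ (∀ B ∈ P, B.Nonempty) ∧
    (P : Set (Finset α)).PairwiseDisjoint id ∧ P.biUnion id = A ∧ F A = ∑ B ∈ P, F B

/-- The Lovász extension of a set-function `F`, evaluated via a decreasing ordering
`w_{j_1} ≥ ⋯ ≥ w_{j_p}` of the components of `w`: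
`f(w) = ∑ₖ w_{j_k} (F({j_1,…,j_k}) − F({j_1,…,j_{k−1}}))`. -/
noncomputable def lovasz {α : Type*} [Fintype α] [DecidableEq α]
    (F : Finset α → ℝ) (w : α → ℝ) : ℝ :=
  let e : Fin (Fintype.card α) ≃ α := (Fintype.equivFin α).symm
  let σ : Equiv.Perm (Fin (Fintype.card α)) := Tuple.sort (fun i => -(w (e i)))
  ∑ k : Fin (Fintype.card α),
    w (e (σ k)) *
      (F ((Finset.univ.filter (fun j => j ≤ k)).image (fun j => e (σ j))) -
       F ((Finset.univ.filter (fun j => j < k)).image (fun j => e (σ j))))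

/-- `Ω(w) = f(|w|)` where `f` is the Lovász extension of `F`. -/
noncomputable def OmegaF {α : Type*} [Fintype α] [DecidableEq α]
    (F : Finset α → ℝ) (w : α → ℝ) : ℝ :=
  lovasz F (fun i => |w i|)

/-- The dual norm `N*(s) = sup { ⟨s, w⟩ : N(w) ≤ 1 }`. -/
noncomputable def dualNorm {α : Type*} [Fintype α] (N : (α → ℝ) → ℝ) (s : α → ℝ) : ℝ :=
  sSup {x : ℝ | ∃ w : α → ℝ, N w ≤ 1 ∧ x = ∑ i, s i * w i}

/-- The support of a vector, as a finset. -/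
def suppF {α : Type*} [Fintype α] (w : α → ℝ) : Finset α :=
  Finset.univ.filter (fun i => w i ≠ 0)

/-- The restriction `F_J` of `F` to `J`, as a set-function on subsets of `J`. -/
def Frestrict {p : ℕ} (F : Finset (Fin p) → ℝ) (J : Finset (Fin p)) :
    Finset {x : Fin p // x ∈ J} → ℝ :=
  fun A => F (A.image Subtype.val)

/-- The contraction `F^J` of `F` by `J`: `F^J(A) = F(A ∪ J) − F(J)` for `A ⊆ Jᶜ`. -/
def Fcontract {p : ℕ} (F : Finset (Fin p) → ℝ) (J : Finset (Fin p)) :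
    Finset {x : Fin p // x ∈ Jᶜ} → ℝ :=
  fun A => F (A.image Subtype.val ∪ J) - F J


/-- The standard Gaussian measure on `ℝ^n` (i.i.d. standard normal coordinates). -/
noncomputable def stdGaussianPi (n : ℕ) : Measure (Fin n → ℝ) :=
  Measure.pi (fun _ => ProbabilityTheory.gaussianReal 0 1)

/-- `ρ(J) = min { (F(B ∪ J) − F(J)) / F(B) : ∅ ≠ B ⊆ Jᶜ }` (with `ρ(J) = 1` if `Jᶜ = ∅`). -/
noncomputable def rhoJ {p : ℕ} (F : Finset (Fin p) → ℝ) (J : Finset (Fin p)) : ℝ :=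
  if J = Finset.univ then 1
  else sInf {x : ℝ | ∃ B : Finset (Fin p), B.Nonempty ∧ B ⊆ Jᶜ ∧ x = (F (B ∪ J) - F J) / F B}

/-- `c(J) = sup { Ω_J(w_J) / ‖w_J‖₂ : 0 ≠ w_J ∈ ℝ^J }`. -/
noncomputable def cJ {p : ℕ} (F : Finset (Fin p) → ℝ) (J : Finset (Fin p)) : ℝ :=
  sSup {x : ℝ | ∃ w : {j : Fin p // j ∈ J} → ℝ, w ≠ 0 ∧
    x = OmegaF (Frestrict F J) w / Real.sqrt (∑ i, w i ^ 2)}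

/-- The regularized least-squares objective `w ↦ (1/(2n)) ‖y − Xw‖₂² + λ Ω(w)`. -/
noncomputable def lsObj {p n : ℕ} (F : Finset (Fin p) → ℝ) (X : Matrix (Fin n) (Fin p) ℝ)
    (lam : ℝ) (y : Fin n → ℝ) (w : Fin p → ℝ) : ℝ :=
  (1 / (2 * n)) * (∑ i, (y i - X.mulVec w i) ^ 2) + lam * OmegaF F w

/-! ### Greedy vectors and the Lovász extension -/

/-- Abel summation: a nonincreasing nonnegative sequence integrates nonnegatively against any
sequence with nonnegative partial sums. -/
lemma abel_sum_nonneg : ∀ (N : ℕ) (v d : Fin N → ℝ), Antitone v → (∀ k, 0 ≤ v k) →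
    (∀ k, 0 ≤ ∑ j with j ≤ k, d j) → 0 ≤ ∑ k, v k * d k := by
  intro N
  induction N with
  | zero => intro v d _ _ _; simp
  | succ N ih =>
    intro v d hv hv0 hd
    have hlast : 0 ≤ ∑ j, d j := by
      have := hd (Fin.last N)
      rwa [Finset.filter_true_of_mem (fun j _ => Fin.le_last j)] at this
    -- subtracting the last value of `v` leaves a shorter sum of the same kind
    have h1 : ∑ k, v k * d k =
        ∑ k : Fin N, (v k.castSucc - v (Fin.last N)) * d k.castSucc
          + v (Fin.last N) * ∑ j, d j := by
      rw [Fin.sum_univ_castSucc, Fin.sum_univ_castSucc d, mul_add, Finset.mul_sum, ← add_assoc,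
        ← Finset.sum_add_distrib]
      congr 1
      exact Finset.sum_congr rfl fun k _ => by ring
    rw [h1]
    refine add_nonneg (ih _ _ ?_ ?_ ?_) (mul_nonneg (hv0 _) hlast)
    · intro a b hab
      exact sub_le_sub_right (hv (Fin.castSucc_le_castSucc_iff.2 hab)) _
    · intro k
      exact sub_nonneg.2 (hv (Fin.le_last _))
    · intro k
      have := hd k.castSucc
      rw [Finset.sum_filter, Fin.sum_univ_castSucc] at this
      rw [Finset.sum_filter]
      simpa [not_le.2 (Fin.castSucc_lt_last k)] using this

section Poly

variable {α : Type*} [Fintype α] [DecidableEq α]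

/-- The submodular polyhedron of `F`: vectors `s` with `s(A) ≤ F(A)` for every `A`. -/
def InPoly (F : Finset α → ℝ) (s : α → ℝ) : Prop := ∀ A : Finset α, ∑ i ∈ A, s i ≤ F A

/-- The properties of the set-function which make `Ω` a norm; they are shared by `F`, its
restrictions, and its contractions by stable sets. -/
structure Good (F : Finset α → ℝ) : Prop where
  subm : Submodular F
  mono : MonotoneF F
  zero : F ∅ = 0
  pos : ∀ k, 0 < F {k}

/-- The greedy vector attached to the ordering `e` of the ground set: its coordinates are the
successive increments of `F` along the ordering. -/
def greedy {N : ℕ} (F : Finset α → ℝ) (e : Fin N ≃ α) (i : α) : ℝ :=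
  F (Finset.univ.filter fun j => e.symm j ≤ e.symm i)
    - F (Finset.univ.filter fun j => e.symm j < e.symm i)

lemma greedy_nonneg {F : Finset α → ℝ} (hF : Good F) {N : ℕ} (e : Fin N ≃ α) (i : α) :
    0 ≤ greedy F e i := by
  refine sub_nonneg.2 (hF.mono ?_)
  intro j hj
  simp only [Finset.mem_filter, Finset.mem_univ, true_and] at hj ⊢
  exact hj.le

/-- Peeling off the element of rank `m` from an initial segment. -/
lemma filter_rank_succ {N : ℕ} (e : Fin N ≃ α) (A : Finset α) {m : ℕ} (hm : m < N) :
    (A.filter fun j => (e.symm j : ℕ) < m + 1) =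
      if e ⟨m, hm⟩ ∈ A then insert (e ⟨m, hm⟩) (A.filter fun j => (e.symm j : ℕ) < m)
      else A.filter fun j => (e.symm j : ℕ) < m := by
  have key : ∀ j, (e.symm j : ℕ) = m ↔ j = e ⟨m, hm⟩ := by
    intro j
    rw [← e.symm_apply_eq, Fin.ext_iff]
  ext j
  have := key j
  split_ifs with h
  · simp only [Finset.mem_filter, Finset.mem_insert, Nat.lt_succ_iff_lt_or_eq]
    rw [this]
    constructor
    · rintro ⟨a, b | b⟩
      · exact Or.inr ⟨a, b⟩
      · exact Or.inl b
    · rintro (b | ⟨a, b⟩)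
      · exact ⟨b ▸ h, Or.inr b⟩
      · exact ⟨a, Or.inl b⟩
  · simp only [Finset.mem_filter, Nat.lt_succ_iff_lt_or_eq]
    rw [this]
    constructor
    · rintro ⟨a, b | b⟩
      · exact ⟨a, b⟩
      · exact absurd (b ▸ a) h
    · rintro ⟨a, b⟩
      exact ⟨a, Or.inl b⟩

lemma sum_filter_rank_succ {N : ℕ} (e : Fin N ≃ α) (A : Finset α) {m : ℕ} (hm : m < N)
    (s : α → ℝ) :
    ∑ i ∈ A.filter (fun j => (e.symm j : ℕ) < m + 1), s i =
      (if e ⟨m, hm⟩ ∈ A then s (e ⟨m, hm⟩) else 0)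
        + ∑ i ∈ A.filter (fun j => (e.symm j : ℕ) < m), s i := by
  rw [filter_rank_succ e A hm]
  split_ifs with h
  · rw [Finset.sum_insert (by simp)]
  · simp

lemma greedy_at {N : ℕ} (F : Finset α → ℝ) (e : Fin N ≃ α) {m : ℕ} (hm : m < N) :
    greedy F e (e ⟨m, hm⟩) =
      F (insert (e ⟨m, hm⟩) (Finset.univ.filter fun j => (e.symm j : ℕ) < m))
        - F (Finset.univ.filter fun j => (e.symm j : ℕ) < m) := by
  have h := filter_rank_succ e Finset.univ hm
  rw [if_pos (Finset.mem_univ _)] at h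
  rw [← h]
  simp [greedy, Fin.le_def, Fin.lt_def]

lemma filter_rank_all {N : ℕ} (e : Fin N ≃ α) (A : Finset α) :
    (A.filter fun j => (e.symm j : ℕ) < N) = A :=
  Finset.filter_true_of_mem fun j _ => (e.symm j).2

/-- Edmonds' theorem: greedy vectors lie in the submodular polyhedron. -/
lemma greedy_inPoly {F : Finset α → ℝ} (hF : Good F) {N : ℕ} (e : Fin N ≃ α) :
    InPoly F (greedy F e) := by
  intro A
  have main : ∀ m ≤ N, ∑ i ∈ A.filter (fun j => (e.symm j : ℕ) < m), greedy F e i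
      ≤ F (A.filter fun j => (e.symm j : ℕ) < m) := by
    intro m
    induction m with
    | zero => intro _; simp [hF.zero]
    | succ m ih =>
      intro hm
      have hm' : m < N := hm
      have ih' := ih hm'.le
      rw [sum_filter_rank_succ e A hm', filter_rank_succ e A hm']
      split_ifs with h
      · rw [greedy_at]
        set P := Finset.univ.filter fun j => (e.symm j : ℕ) < m
        set B := A.filter fun j => (e.symm j : ℕ) < m
        set x := e ⟨m, hm'⟩
        have hBP : B ⊆ P := Finset.filter_subset_filter _ (Finset.subset_univ _)
        have hxP : x ∉ P := by simp [P, x]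
        have h1 : insert x B ∪ P = insert x P := by
          rw [Finset.insert_union, Finset.union_eq_right.2 hBP]
        have h2 : insert x B ∩ P = B := by
          rw [Finset.insert_inter_of_notMem hxP, Finset.inter_eq_left.2 hBP]
        have := hF.subm (insert x B) P
        rw [h1, h2] at this
        linarith
      · simpa using ih'
  have := main N le_rfl
  rwa [filter_rank_all] at this

/-- Greedy vectors are tight on initial segments of the ordering. -/
lemma greedy_tight {F : Finset α → ℝ} (h0 : F ∅ = 0) {N : ℕ} (e : Fin N ≃ α)
    (A : Finset α) (hA : ∀ i ∈ A, ∀ j, e.symm j ≤ e.symm i → j ∈ A) :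
    ∑ i ∈ A, greedy F e i = F A := by
  have main : ∀ m ≤ N, ∑ i ∈ A.filter (fun j => (e.symm j : ℕ) < m), greedy F e i
      = F (A.filter fun j => (e.symm j : ℕ) < m) := by
    intro m
    induction m with
    | zero => intro _; simp [h0]
    | succ m ih =>
      intro hm
      have hm' : m < N := hm
      have ih' := ih hm'.le
      rw [sum_filter_rank_succ e A hm', filter_rank_succ e A hm']
      split_ifs with h
      · have hseg : (Finset.univ.filter fun j => (e.symm j : ℕ) < m)
            = A.filter fun j => (e.symm j : ℕ) < m := by
          ext j
          simp only [Finset.mem_filter, Finset.mem_univ, true_and]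
          refine ⟨fun hj => ⟨hA _ h j ?_, hj⟩, fun hj => hj.2⟩
          simp [Fin.le_def, hj.le]
        rw [greedy_at, hseg, ih']
        ring
      · simpa using ih'
  have := main N le_rfl
  rwa [filter_rank_all] at this

/-- The ordering of the ground set along which `lovasz` sums. -/
def sortEquiv (w : α → ℝ) : Fin (Fintype.card α) ≃ α :=
  (Tuple.sort fun i => -(w ((Fintype.equivFin α).symm i))).trans (Fintype.equivFin α).symm

lemma sortEquiv_antitone (w : α → ℝ) : Antitone fun k => w (sortEquiv w k) := by
  have := Tuple.monotone_sort fun i => -(w ((Fintype.equivFin α).symm i))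
  intro a b hab
  have h := this hab
  simpa [sortEquiv] using h

lemma lovasz_eq_greedy (F : Finset α → ℝ) (w : α → ℝ) :
    lovasz F w = ∑ i, greedy F (sortEquiv w) i * w i := by
  rw [← (sortEquiv w).sum_comp]
  unfold lovasz
  refine Finset.sum_congr rfl fun k _ => ?_
  have hle : ((Finset.univ.filter fun j => j ≤ k).image fun j => sortEquiv w j)
      = Finset.univ.filter fun j => (sortEquiv w).symm j ≤ k := by
    ext x
    simp only [Finset.mem_image, Finset.mem_filter, Finset.mem_univ, true_and]
    exact ⟨by rintro ⟨j, hj, rfl⟩; simpa using hj, fun h => ⟨_, h, by simp⟩⟩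
  have hlt : ((Finset.univ.filter fun j => j < k).image fun j => sortEquiv w j)
      = Finset.univ.filter fun j => (sortEquiv w).symm j < k := by
    ext x
    simp only [Finset.mem_image, Finset.mem_filter, Finset.mem_univ, true_and]
    exact ⟨by rintro ⟨j, hj, rfl⟩; simpa using hj, fun h => ⟨_, h, by simp⟩⟩
  have hg : greedy F (sortEquiv w) (sortEquiv w k) =
      F ((Finset.univ.filter fun j => j ≤ k).image fun j => sortEquiv w j)
        - F ((Finset.univ.filter fun j => j < k).image fun j => sortEquiv w j) := by
    rw [hle, hlt]
    simp [greedy]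
  rw [hg, mul_comm]
  rfl

/-- `Ω(w)` is attained by a nonnegative vector of the submodular polyhedron which is tight on
every strict superlevel set of `|w|`. -/
lemma exists_omega_eq {F : Finset α → ℝ} (hF : Good F) (w : α → ℝ) :
    ∃ s : α → ℝ, (∀ i, 0 ≤ s i) ∧ InPoly F s ∧ OmegaF F w = ∑ i, s i * |w i| ∧
      ∀ τ : ℝ, ∑ i with τ < |w i|, s i = F (Finset.univ.filter fun i => τ < |w i|) := by
  set e := sortEquiv fun i => |w i| with he
  refine ⟨greedy F e, greedy_nonneg hF e, greedy_inPoly hF e, ?_, fun τ => ?_⟩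
  · exact lovasz_eq_greedy F _
  · refine greedy_tight hF.zero e _ fun i hi j hj => ?_
    simp only [Finset.mem_filter, Finset.mem_univ, true_and] at hi ⊢
    have := sortEquiv_antitone (fun i => |w i|) hj
    simp only [← he, Equiv.apply_symm_apply] at this
    linarith

/-- `Ω` is the support function of the submodular polyhedron, evaluated at `|w|`. -/
lemma sum_le_omega {F : Finset α → ℝ} (hF : Good F) {s : α → ℝ} (hs : InPoly F s)
    (w : α → ℝ) : ∑ i, s i * |w i| ≤ OmegaF F w := by
  unfold OmegaF
  rw [lovasz_eq_greedy]
  set e := sortEquiv fun i => |w i| with he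
  have h := abel_sum_nonneg _ (fun k => |w (e k)|) (fun k => greedy F e (e k) - s (e k))
    (sortEquiv_antitone fun i => |w i|) (fun k => abs_nonneg _) (fun k => by
      have hmap : ∀ f : α → ℝ, ∑ j with j ≤ k, f (e j) = ∑ i with e.symm i ≤ k, f i := by
        intro f
        rw [Finset.sum_filter, Finset.sum_filter, ← e.sum_comp]
        simp
      rw [hmap fun i => greedy F e i - s i, Finset.sum_sub_distrib,
        greedy_tight hF.zero e _ (fun i hi j hj => by
          simp only [Finset.mem_filter, Finset.mem_univ, true_and] at hi ⊢
          exact hj.trans hi)]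
      exact sub_nonneg.2 (hs _))
  rw [e.sum_comp fun i => |w i| * (greedy F e i - s i)] at h
  have h2 : ∑ i, |w i| * (greedy F e i - s i)
      = ∑ i, greedy F e i * |w i| - ∑ i, s i * |w i| := by
    rw [← Finset.sum_sub_distrib]
    exact Finset.sum_congr rfl fun i _ => by ring
  linarith

end Poly

/-! ### The norm `Ω` and its dual -/

section Norm

variable {α : Type*} [Fintype α] [DecidableEq α] {F : Finset α → ℝ}

lemma omega_nonneg (hF : Good F) (w : α → ℝ) : 0 ≤ OmegaF F w := by
  obtain ⟨s, hs, -, h, -⟩ := exists_omega_eq hF w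
  rw [h]
  exact Finset.sum_nonneg fun i _ => mul_nonneg (hs i) (abs_nonneg _)

/-- `Ω` depends monotonically on the absolute values of the coordinates. -/
lemma omega_le_of_abs_le (hF : Good F) {w v : α → ℝ} (h : ∀ i, |w i| ≤ |v i|) :
    OmegaF F w ≤ OmegaF F v := by
  obtain ⟨s, hs, hP, hw, -⟩ := exists_omega_eq hF w
  rw [hw]
  exact (Finset.sum_le_sum fun i _ => mul_le_mul_of_nonneg_left (h i) (hs i)).trans
    (sum_le_omega hF hP v)

lemma omega_add_le (hF : Good F) (w v : α → ℝ) :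
    OmegaF F (w + v) ≤ OmegaF F w + OmegaF F v := by
  obtain ⟨s, hs, hP, h, -⟩ := exists_omega_eq hF (w + v)
  rw [h]
  refine le_trans ?_ (add_le_add (sum_le_omega hF hP w) (sum_le_omega hF hP v))
  rw [← Finset.sum_add_distrib]
  refine Finset.sum_le_sum fun i _ => ?_
  rw [← mul_add]
  exact mul_le_mul_of_nonneg_left (abs_add_le _ _) (hs i)

lemma omega_smul (hF : Good F) (c : ℝ) (w : α → ℝ) : OmegaF F (c • w) = |c| * OmegaF F w := by
  have key : ∀ s : α → ℝ, ∑ i, s i * |(c • w) i| = |c| * ∑ i, s i * |w i| := by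
    intro s
    rw [Finset.mul_sum]
    refine Finset.sum_congr rfl fun i _ => ?_
    simp only [Pi.smul_apply, smul_eq_mul, abs_mul]
    ring
  apply le_antisymm
  · obtain ⟨s, hs, hP, h, -⟩ := exists_omega_eq hF (c • w)
    rw [h, key]
    exact mul_le_mul_of_nonneg_left (sum_le_omega hF hP w) (abs_nonneg _)
  · obtain ⟨s, hs, hP, h, -⟩ := exists_omega_eq hF w
    rw [h, ← key]
    exact sum_le_omega hF hP _

lemma omega_neg (hF : Good F) (w : α → ℝ) : OmegaF F (-w) = OmegaF F w := by
  simpa using omega_smul hF (-1) w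

lemma omega_zero (hF : Good F) : OmegaF F 0 = 0 := by
  simpa using omega_smul hF 0 0

lemma omega_coord_le (hF : Good F) (w : α → ℝ) (i : α) : F {i} * |w i| ≤ OmegaF F w := by
  have hP : InPoly F (Pi.single i (F {i})) := by
    intro A
    have hsum : ∑ j ∈ A, (Pi.single i (F {i}) : α → ℝ) j = if i ∈ A then F {i} else 0 := by
      simp [Pi.single_apply]
    rw [hsum]
    split_ifs with h
    · exact hF.mono (Finset.singleton_subset_iff.2 h)
    · rw [← hF.zero]; exact hF.mono (Finset.empty_subset _)
  have := sum_le_omega hF hP w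
  rwa [Finset.sum_eq_single i (fun j _ hj => by simp [hj]) (by simp), Pi.single_eq_same] at this

lemma omega_le_sum (hF : Good F) (w : α → ℝ) : OmegaF F w ≤ ∑ i, F {i} * |w i| := by
  obtain ⟨s, hs, hP, h, -⟩ := exists_omega_eq hF w
  rw [h]
  exact Finset.sum_le_sum fun i _ =>
    mul_le_mul_of_nonneg_right (by simpa using hP {i}) (abs_nonneg _)

lemma omega_eq_zero (hF : Good F) {w : α → ℝ} (h : OmegaF F w ≤ 0) : w = 0 := by
  funext i
  have h1 := (omega_coord_le hF w i).trans h
  have h2 := hF.pos i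
  have h3 : |w i| ≤ 0 := by
    by_contra hc
    push Not at hc
    have := mul_pos h2 hc
    linarith
  exact abs_nonpos_iff.1 h3

lemma omega_abs_sub_le (hF : Good F) (w v : α → ℝ) :
    |OmegaF F w - OmegaF F v| ≤ OmegaF F (w - v) := by
  have h1 := omega_add_le hF (w - v) v
  have h2 := omega_add_le hF (v - w) w
  rw [← neg_sub w v, omega_neg hF] at h2
  simp only [sub_add_cancel, neg_sub] at h1 h2
  rw [abs_le]
  constructor <;> linarith

lemma omega_continuous (hF : Good F) : Continuous (OmegaF F) := by
  rw [continuous_iff_continuousAt]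
  intro v
  rw [ContinuousAt, tendsto_iff_dist_tendsto_zero]
  have hg : Filter.Tendsto (fun w : α → ℝ => ∑ i, F {i} * |(w - v) i|) (nhds v) (nhds 0) := by
    have hc : Continuous fun w : α → ℝ => ∑ i, F {i} * |(w - v) i| := by fun_prop
    simpa using hc.tendsto v
  refine squeeze_zero (fun _ => dist_nonneg) (fun w => ?_) hg
  rw [Real.dist_eq]
  exact (omega_abs_sub_le hF w v).trans (omega_le_sum hF _)

lemma dualNorm_bddAbove (hF : Good F) (s : α → ℝ) :
    BddAbove {x : ℝ | ∃ w : α → ℝ, OmegaF F w ≤ 1 ∧ x = ∑ i, s i * w i} := by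
  refine ⟨∑ i, |s i| * (1 / F {i}), ?_⟩
  rintro _ ⟨w, hw, rfl⟩
  refine Finset.sum_le_sum fun i _ => (le_abs_self _).trans ?_
  rw [abs_mul]
  refine mul_le_mul_of_nonneg_left ?_ (abs_nonneg _)
  rw [le_div_iff₀' (hF.pos i)]
  exact (omega_coord_le hF w i).trans hw

lemma dualNorm_nonneg (hF : Good F) (s : α → ℝ) : 0 ≤ dualNorm (OmegaF F) s :=
  le_csSup (dualNorm_bddAbove hF s) ⟨0, by simp [omega_zero hF], by simp⟩

/-- Hölder's inequality for the pair `Ω*`, `Ω`. -/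
lemma sum_mul_le_dualNorm (hF : Good F) (s w : α → ℝ) :
    ∑ i, s i * w i ≤ dualNorm (OmegaF F) s * OmegaF F w := by
  rcases (omega_nonneg hF w).eq_or_lt with h | h
  · have : w = 0 := omega_eq_zero hF h.symm.le
    subst this
    simp [omega_zero hF]
  · rw [← div_le_iff₀ h]
    refine le_csSup (dualNorm_bddAbove hF s) ⟨(OmegaF F w)⁻¹ • w, ?_, ?_⟩
    · rw [omega_smul hF, abs_of_pos (inv_pos.2 h), inv_mul_cancel₀ h.ne']
    · rw [Finset.sum_div]
      refine Finset.sum_congr rfl fun i _ => ?_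
      simp only [Pi.smul_apply, smul_eq_mul]
      ring

lemma isOpen_lt_dualNorm (hF : Good F) (τ : ℝ) :
    IsOpen {z : α → ℝ | τ < dualNorm (OmegaF F) z} := by
  have : {z : α → ℝ | τ < dualNorm (OmegaF F) z}
      = ⋃ (w : α → ℝ) (_ : OmegaF F w ≤ 1), {z | τ < ∑ i, z i * w i} := by
    ext z
    simp only [Set.mem_ofPred_eq, Set.mem_iUnion, exists_prop]
    constructor
    · intro h
      obtain ⟨_, ⟨w, hw, rfl⟩, h2⟩ :=
        exists_lt_of_lt_csSup (s := {x : ℝ | ∃ w : α → ℝ, OmegaF F w ≤ 1 ∧ x = ∑ i, z i * w i})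
          ⟨0, 0, by simp [omega_zero hF], by simp⟩ h
      exact ⟨w, hw, h2⟩
    · rintro ⟨w, hw, h⟩
      exact h.trans_le (le_csSup (dualNorm_bddAbove hF z) ⟨w, hw, rfl⟩)
  rw [this]
  refine isOpen_iUnion fun w => isOpen_iUnion fun _ => ?_
  exact isOpen_lt continuous_const (by fun_prop)

/-- Activating a coordinate `k` which does not increase `F` of the support does not increase `Ω`,
as long as the new value is smaller than all the nonzero ones. Hence at a minimizer with an
unstable support, some partial derivative of the smooth part vanishes. -/
lemma omega_add_single_le (hF : Good F) {w : α → ℝ} {k : α} (hk : w k = 0)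
    (hFk : F (insert k (suppF w)) ≤ F (suppF w)) {t : ℝ} (ht : ∀ i, w i ≠ 0 → |t| < |w i|) :
    OmegaF F (w + Pi.single k t) ≤ OmegaF F w := by
  obtain ⟨s, hs, hP, h, htight⟩ := exists_omega_eq hF (w + Pi.single k t)
  have habs : ∀ i, |(w + Pi.single k t : α → ℝ) i| = |w i| + if i = k then |t| else 0 := by
    intro i
    by_cases hi : i = k
    · subst hi; simp [hk]
    · simp [hi]
  have hlevel : (Finset.univ.filter fun i => |t| < |(w + Pi.single k t : α → ℝ) i|) = suppF w := by
    ext i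
    simp only [suppF, Finset.mem_filter, Finset.mem_univ, true_and, habs]
    by_cases hi : i = k
    · subst hi; simp [hk]
    · simp only [hi, if_false, add_zero]
      refine ⟨fun h0 h1 => ?_, ht i⟩
      rw [h1, abs_zero] at h0
      exact absurd h0 (not_lt.2 (abs_nonneg t))
  have hsupp := htight |t|
  rw [hlevel] at hsupp
  have hins := hP (insert k (suppF w))
  rw [Finset.sum_insert (by simp [suppF, hk]), hsupp] at hins
  have hsk : s k ≤ 0 := by linarith
  rw [h]
  have : ∑ i, s i * |(w + Pi.single k t : α → ℝ) i| = ∑ i, s i * |w i| + s k * |t| := by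
    simp_rw [habs, mul_add, Finset.sum_add_distrib]
    simp
  rw [this]
  have h1 := sum_le_omega hF hP w
  have h2 := mul_nonneg (neg_nonneg.2 hsk) (abs_nonneg t)
  linarith

end Norm

/-! ### Restriction and contraction -/

section RestrictContract

variable {p : ℕ} {F : Finset (Fin p) → ℝ}

/-- Extension by zero of a vector indexed by `J`. -/
def extJ (J : Finset (Fin p)) (v : {x : Fin p // x ∈ J} → ℝ) : Fin p → ℝ :=
  fun i => if h : i ∈ J then v ⟨i, h⟩ else 0

@[simp] lemma extJ_val (J : Finset (Fin p)) (v : {x : Fin p // x ∈ J} → ℝ)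
    (i : {x : Fin p // x ∈ J}) : extJ J v i.1 = v i := by
  simp [extJ, i.2]

lemma extJ_of_notMem {J : Finset (Fin p)} (v : {x : Fin p // x ∈ J} → ℝ) {i : Fin p}
    (h : i ∉ J) : extJ J v i = 0 := by
  simp [extJ, h]

lemma extJ_restrict {J : Finset (Fin p)} {w : Fin p → ℝ} (hw : ∀ i, i ∉ J → w i = 0) :
    extJ J (fun i => w i.1) = w := by
  funext i
  by_cases h : i ∈ J
  · simp [extJ, h]
  · simp [extJ, h, hw i h]

lemma sum_subtype_J (J : Finset (Fin p)) (f : Fin p → ℝ) :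
    ∑ i : {x : Fin p // x ∈ J}, f i.1 = ∑ i ∈ J, f i :=
  Finset.sum_coe_sort J f

lemma sum_extJ_mul (J : Finset (Fin p)) (v : {x : Fin p // x ∈ J} → ℝ) (f : Fin p → ℝ) :
    ∑ i, f i * extJ J v i = ∑ i : {x : Fin p // x ∈ J}, f i.1 * v i := by
  rw [← Finset.sum_subset (Finset.subset_univ J)
    (fun i _ hi => by rw [extJ_of_notMem v hi, mul_zero]),
    ← sum_subtype_J J fun i => f i * extJ J v i]
  simp

/-- The trace on `J` of a set, as a set of elements of the subtype. -/
def traceJ (J A : Finset (Fin p)) : Finset {x : Fin p // x ∈ J} :=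
  Finset.univ.filter fun i => i.1 ∈ A

lemma traceJ_image (J A : Finset (Fin p)) : (traceJ J A).image Subtype.val = A ∩ J := by
  ext i
  simp [traceJ, and_comm]

lemma sum_traceJ (J A : Finset (Fin p)) (f : {x : Fin p // x ∈ J} → ℝ) :
    ∑ i ∈ traceJ J A, f i = ∑ i ∈ A, extJ J f i := by
  have h1 : ∑ i ∈ A, extJ J f i = ∑ i ∈ A ∩ J, extJ J f i := by
    refine (Finset.sum_subset Finset.inter_subset_left fun i hi hi' => ?_).symm
    exact extJ_of_notMem f fun h => hi' (Finset.mem_inter.2 ⟨hi, h⟩)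
  rw [h1, ← traceJ_image, Finset.sum_image (fun a _ b _ h => Subtype.ext h)]
  simp

lemma good_restrict (hF : Good F) (J : Finset (Fin p)) : Good (Frestrict F J) where
  subm A B := by
    unfold Frestrict
    rw [Finset.image_union, Finset.image_inter _ _ Subtype.val_injective]
    exact hF.subm _ _
  mono A B h := hF.mono (Finset.image_subset_image h)
  zero := by simp [Frestrict, hF.zero]
  pos k := by simpa [Frestrict] using hF.pos k.1

lemma good_contract (hF : Good F) {J : Finset (Fin p)} (hJ : StableSet F J) :
    Good (Fcontract F J) where
  subm A B := by
    unfold Fcontract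
    rw [Finset.image_union, Finset.image_inter _ _ Subtype.val_injective,
      Finset.union_union_distrib_right, Finset.inter_union_distrib_right]
    have := hF.subm (A.image Subtype.val ∪ J) (B.image Subtype.val ∪ J)
    linarith
  mono A B h :=
    sub_le_sub_right (hF.mono (Finset.union_subset_union_left (Finset.image_subset_image h))) _
  zero := by simp [Fcontract]
  pos k := by
    have hk : k.1 ∉ J := Finset.mem_compl.1 k.2
    refine sub_pos.2 (hJ _ Finset.subset_union_right fun h => hk ?_)
    exact (Finset.ext_iff.1 h k.1).2
      (Finset.mem_union_left J (Finset.mem_image_of_mem _ (Finset.mem_singleton_self k)))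

lemma omega_restrict (hF : Good F) (J : Finset (Fin p)) (v : {x : Fin p // x ∈ J} → ℝ) :
    OmegaF (Frestrict F J) v = OmegaF F (extJ J v) := by
  have habs : ∀ f : Fin p → ℝ,
      ∑ i, f i * |extJ J v i| = ∑ i : {x : Fin p // x ∈ J}, f i.1 * |v i| := by
    intro f
    rw [← sum_extJ_mul J (fun i => |v i|)]
    refine Finset.sum_congr rfl fun i _ => ?_
    by_cases h : i ∈ J <;> simp [extJ, h]
  apply le_antisymm
  · obtain ⟨s, hs, hP, h, -⟩ := exists_omega_eq (good_restrict hF J) v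
    have hP' : InPoly F (extJ J s) := by
      intro A
      rw [← sum_traceJ]
      refine (hP _).trans ?_
      unfold Frestrict
      rw [traceJ_image]
      exact hF.mono Finset.inter_subset_left
    have := sum_le_omega hF hP' (extJ J v)
    rw [habs] at this
    simpa [h] using this
  · obtain ⟨s, hs, hP, h, -⟩ := exists_omega_eq hF (extJ J v)
    have hP' : InPoly (Frestrict F J) fun i => s i.1 := by
      intro A
      have := hP (A.image Subtype.val)
      rwa [Finset.sum_image (fun a _ b _ h => Subtype.ext h)] at this
    rw [h, habs]
    exact sum_le_omega (good_restrict hF J) hP' v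

/-- The decomposition inequality `Ω(w) ≥ Ω_J(w_J) + Ω^J(w_{Jᶜ})`: points of the two smaller
polyhedra concatenate to a point of the polyhedron of `F`. -/
lemma omega_decomp (hF : Good F) {J : Finset (Fin p)} (hJ : StableSet F J) (w : Fin p → ℝ) :
    OmegaF (Frestrict F J) (fun i => w i.1) + OmegaF (Fcontract F J) (fun i => w i.1)
      ≤ OmegaF F w := by
  obtain ⟨s, -, hP, h, -⟩ := exists_omega_eq (good_restrict hF J) fun i => w i.1
  obtain ⟨s', -, hP', h', -⟩ := exists_omega_eq (good_contract hF hJ) fun i => w i.1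
  have hPs : InPoly F (extJ J s + extJ Jᶜ s') := by
    intro A
    simp only [Pi.add_apply, Finset.sum_add_distrib, ← sum_traceJ]
    have h1 := hP (traceJ J A)
    have h2 := hP' (traceJ Jᶜ A)
    unfold Frestrict at h1
    unfold Fcontract at h2
    rw [traceJ_image] at h1 h2
    have h3 : A ∩ Jᶜ ∪ J = A ∪ J := by
      ext i; simp only [Finset.mem_union, Finset.mem_inter, Finset.mem_compl]; tauto
    rw [h3] at h2
    have := hF.subm A J
    linarith
  have := sum_le_omega hF hPs w
  rw [h, h']
  refine le_trans (le_of_eq ?_) this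
  simp only [Pi.add_apply, add_mul, Finset.sum_add_distrib]
  simp_rw [mul_comm _ |w _|]
  rw [sum_extJ_mul J s fun i => |w i|, sum_extJ_mul Jᶜ s' fun i => |w i|]

lemma rhoJ_spec (hF : Good F) {J : Finset (Fin p)} (hJ : StableSet F J) :
    0 < rhoJ F J ∧ rhoJ F J ≤ 1 ∧
      ∀ B : Finset (Fin p), B ⊆ Jᶜ → rhoJ F J * F B ≤ F (B ∪ J) - F J := by
  have hFne : ∀ B : Finset (Fin p), B.Nonempty → 0 < F B := by
    rintro B ⟨i, hi⟩
    exact (hF.pos i).trans_le (hF.mono (Finset.singleton_subset_iff.2 hi))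
  unfold rhoJ
  split_ifs with h
  · refine ⟨one_pos, le_rfl, fun B hB => ?_⟩
    rw [h, Finset.compl_univ, Finset.subset_empty] at hB
    subst hB
    simp [hF.zero]
  · set S := {x : ℝ | ∃ B : Finset (Fin p), B.Nonempty ∧ B ⊆ Jᶜ ∧ x = (F (B ∪ J) - F J) / F B}
    have hpos : ∀ x ∈ S, 0 < x := by
      rintro _ ⟨B, ⟨i, hi⟩, hBJ, rfl⟩
      refine div_pos (sub_pos.2 (hJ _ Finset.subset_union_right fun hEq => ?_)) (hFne B ⟨i, hi⟩)
      refine Finset.mem_compl.1 (hBJ hi) ?_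
      rw [hEq]
      exact Finset.mem_union_left _ hi
    have hfin : S.Finite := by
      refine (Set.finite_range fun B : Finset (Fin p) => (F (B ∪ J) - F J) / F B).subset ?_
      rintro _ ⟨B, -, -, rfl⟩
      exact ⟨B, rfl⟩
    have hne : S.Nonempty := by
      have hc : Jᶜ.Nonempty := by
        rw [Finset.nonempty_iff_ne_empty]
        intro hc
        exact h ((Finset.compl_eq_empty_iff J).1 hc)
      exact ⟨_, Jᶜ, hc, Finset.Subset.rfl, rfl⟩
    refine ⟨hpos _ (hne.csInf_mem hfin), ?_, fun B hB => ?_⟩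
    · obtain ⟨x, B, hB, hBJ, rfl⟩ := hne
      refine (csInf_le hfin.bddBelow ⟨B, hB, hBJ, rfl⟩).trans ?_
      rw [div_le_one (hFne B hB)]
      have := hF.subm B J
      have h2 : 0 ≤ F (B ∩ J) := by rw [← hF.zero]; exact hF.mono (Finset.empty_subset _)
      linarith
    · rcases B.eq_empty_or_nonempty with rfl | hne
      · simp [hF.zero]
      · rw [← le_div_iff₀ (hFne B hne)]
        exact csInf_le hfin.bddBelow ⟨B, hne, hB, rfl⟩

lemma rho_mul_omega_le (hF : Good F) {J : Finset (Fin p)} (hJ : StableSet F J)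
    (v : {x : Fin p // x ∈ Jᶜ} → ℝ) :
    rhoJ F J * OmegaF F (extJ Jᶜ v) ≤ OmegaF (Fcontract F J) v := by
  obtain ⟨h0, -, hρ⟩ := rhoJ_spec hF hJ
  rw [← omega_restrict hF]
  obtain ⟨s, -, hP, h, -⟩ := exists_omega_eq (good_restrict hF Jᶜ) v
  have hP' : InPoly (Fcontract F J) fun i => rhoJ F J * s i := by
    intro A
    rw [← Finset.mul_sum]
    refine (mul_le_mul_of_nonneg_left (hP A) h0.le).trans (hρ _ ?_)
    intro i hi
    obtain ⟨j, -, rfl⟩ := Finset.mem_image.1 hi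
    exact j.2
  have := sum_le_omega (good_contract hF hJ) hP' v
  rw [h, Finset.mul_sum]
  simpa [mul_assoc] using this

lemma omega_le_cJ (hF : Good F) (J : Finset (Fin p)) (v : {x : Fin p // x ∈ J} → ℝ) :
    OmegaF (Frestrict F J) v ≤ cJ F J * Real.sqrt (∑ i, v i ^ 2) := by
  have hG := good_restrict hF J
  by_cases hv : v = 0
  · subst hv; simp [omega_zero hG]
  have hpos : ∀ w : {x : Fin p // x ∈ J} → ℝ, w ≠ 0 → 0 < Real.sqrt (∑ i, w i ^ 2) := by
    intro w hw
    obtain ⟨i, hi⟩ := Function.ne_iff.1 hw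
    refine Real.sqrt_pos.2 (lt_of_lt_of_le (pow_pos (abs_pos.2 hi) 2) ?_)
    rw [sq_abs]
    exact Finset.single_le_sum (f := fun i => w i ^ 2) (fun j _ => sq_nonneg _)
      (Finset.mem_univ i)
  rw [← div_le_iff₀ (hpos v hv)]
  refine le_csSup ⟨∑ i, Frestrict F J {i}, ?_⟩ ⟨v, hv, rfl⟩
  rintro _ ⟨w, hw, rfl⟩
  rw [div_le_iff₀ (hpos w hw)]
  refine (omega_le_sum hG w).trans ?_
  rw [Finset.sum_mul]
  refine Finset.sum_le_sum fun i _ => mul_le_mul_of_nonneg_left ?_ (hG.pos i).le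
  rw [← Real.sqrt_sq_eq_abs]
  exact Real.sqrt_le_sqrt (Finset.single_le_sum (f := fun i => w i ^ 2)
    (fun j _ => sq_nonneg _) (Finset.mem_univ i))

end RestrictContract

/-! ### The penalized quadratic problem on a coordinate subspace -/

section Optimization

open scoped Matrix

variable {p : ℕ}

/-- Vectors of `ℝ^p` supported in `T`. -/
def SuppIn (T : Finset (Fin p)) (w : Fin p → ℝ) : Prop := ∀ i, i ∉ T → w i = 0

lemma SuppIn.sub {T : Finset (Fin p)} {w v : Fin p → ℝ} (hw : SuppIn T w) (hv : SuppIn T v) :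
    SuppIn T (w - v) := fun i hi => by simp [hw i hi, hv i hi]

lemma SuppIn.add {T : Finset (Fin p)} {w v : Fin p → ℝ} (hw : SuppIn T w) (hv : SuppIn T v) :
    SuppIn T (w + v) := fun i hi => by simp [hw i hi, hv i hi]

lemma SuppIn.smul {T : Finset (Fin p)} {w : Fin p → ℝ} (c : ℝ) (hw : SuppIn T w) :
    SuppIn T (c • w) := fun i hi => by simp [hw i hi]

lemma SuppIn.mono {T J : Finset (Fin p)} (h : T ⊆ J) {w : Fin p → ℝ} (hw : SuppIn T w) :
    SuppIn J w := fun i hi => hw i fun hT => hi (h hT)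

lemma SuppIn.zero (T : Finset (Fin p)) : SuppIn T (0 : Fin p → ℝ) := fun _ _ => rfl

/-- The least-squares objective written through `Q` and the correlation `r = σ Xᵀε / n` of the
noise with the design; it differs from `lsObj` by a constant in `w`. -/
def Phi (F : Finset (Fin p) → ℝ) (Q : Matrix (Fin p) (Fin p) ℝ) (wstar : Fin p → ℝ) (lam : ℝ)
    (r w : Fin p → ℝ) : ℝ :=
  (1 / 2) * ((w - wstar) ⬝ᵥ (Q *ᵥ (w - wstar))) - r ⬝ᵥ w + lam * OmegaF F w

/-- The gradient of the smooth part of `Phi`. -/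
def grad (Q : Matrix (Fin p) (Fin p) ℝ) (wstar r w : Fin p → ℝ) : Fin p → ℝ :=
  Q *ᵥ (w - wstar) - r

/-- `v` minimizes `Phi` among the vectors supported in `T`. -/
def IsMinIn (F : Finset (Fin p) → ℝ) (Q : Matrix (Fin p) (Fin p) ℝ) (wstar : Fin p → ℝ) (lam : ℝ)
    (T : Finset (Fin p)) (r v : Fin p → ℝ) : Prop :=
  SuppIn T v ∧ ∀ w, SuppIn T w → Phi F Q wstar lam r v ≤ Phi F Q wstar lam r w

/-- The standing assumptions: `F` is good, `Q` is symmetric positive semidefinite, with smallest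
eigenvalue at least `kappa > 0` on vectors supported in `J`, and `wstar` is supported in `J`. -/
structure Setup (F : Finset (Fin p) → ℝ) (Q : Matrix (Fin p) (Fin p) ℝ) (J : Finset (Fin p))
    (wstar : Fin p → ℝ) (lam kappa : ℝ) : Prop where
  good : Good F
  symm : Qᵀ = Q
  psd : ∀ x : Fin p → ℝ, 0 ≤ x ⬝ᵥ (Q *ᵥ x)
  kpos : 0 < kappa
  kle : ∀ x, SuppIn J x → kappa * (x ⬝ᵥ x) ≤ x ⬝ᵥ (Q *ᵥ x)
  lpos : 0 < lam
  star : SuppIn J wstar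

variable {F : Finset (Fin p) → ℝ} {Q : Matrix (Fin p) (Fin p) ℝ} {J : Finset (Fin p)}
  {wstar : Fin p → ℝ} {lam kappa : ℝ}

lemma symm_dot (hQ : Qᵀ = Q) (x y : Fin p → ℝ) : x ⬝ᵥ (Q *ᵥ y) = y ⬝ᵥ (Q *ᵥ x) := by
  rw [Matrix.dotProduct_mulVec, ← Matrix.mulVec_transpose, hQ, dotProduct_comm]

lemma Phi_expand (hQ : Qᵀ = Q) (r v w : Fin p → ℝ) :
    Phi F Q wstar lam r w = Phi F Q wstar lam r v + grad Q wstar r v ⬝ᵥ (w - v)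
      + (1 / 2) * ((w - v) ⬝ᵥ (Q *ᵥ (w - v))) + lam * (OmegaF F w - OmegaF F v) := by
  have h1 : w - wstar = (w - v) + (v - wstar) := by abel
  have h2 : r ⬝ᵥ w = r ⬝ᵥ (w - v) + r ⬝ᵥ v := by rw [← dotProduct_add, sub_add_cancel]
  unfold Phi grad
  rw [h1, h2, Matrix.mulVec_add, dotProduct_add, add_dotProduct, add_dotProduct,
    symm_dot hQ (v - wstar) (w - v), sub_dotProduct (Q *ᵥ (v - wstar)) r,
    dotProduct_comm (Q *ᵥ (v - wstar)) (w - v)]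
  ring

/-- The first-order optimality condition, as a variational inequality. -/
lemma IsMinIn.variational (hF : Good F) (hQ : Qᵀ = Q) (hl : 0 < lam) {T : Finset (Fin p)}
    {r v : Fin p → ℝ} (hv : IsMinIn F Q wstar lam T r v) {w : Fin p → ℝ} (hw : SuppIn T w) :
    0 ≤ grad Q wstar r v ⬝ᵥ (w - v) + lam * (OmegaF F w - OmegaF F v) := by
  set A := grad Q wstar r v ⬝ᵥ (w - v) + lam * (OmegaF F w - OmegaF F v) with hA
  set B := (1 / 2) * ((w - v) ⬝ᵥ (Q *ᵥ (w - v))) with hB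
  have key : ∀ t : ℝ, 0 < t → t ≤ 1 → 0 ≤ A + t * B := by
    intro t ht ht1
    have h1 := hv.2 (v + t • (w - v)) (hv.1.add ((hw.sub hv.1).smul t))
    rw [Phi_expand hQ r v (v + t • (w - v))] at h1
    simp only [add_sub_cancel_left, Matrix.mulVec_smul, dotProduct_smul, smul_dotProduct,
      smul_eq_mul] at h1
    have h2 : OmegaF F (v + t • (w - v)) ≤ (1 - t) * OmegaF F v + t * OmegaF F w := by
      have h3 : v + t • (w - v) = (1 - t) • v + t • w := by
        funext i
        simp only [Pi.add_apply, Pi.smul_apply, Pi.sub_apply, smul_eq_mul]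
        ring
      rw [h3]
      refine (omega_add_le hF _ _).trans (le_of_eq ?_)
      rw [omega_smul hF, omega_smul hF, abs_of_nonneg (sub_nonneg.2 ht1), abs_of_pos ht]
    have h4 : lam * (OmegaF F (v + t • (w - v)) - OmegaF F v)
        ≤ lam * (t * (OmegaF F w - OmegaF F v)) :=
      mul_le_mul_of_nonneg_left (by linarith) hl.le
    have h5 : 0 ≤ t * (A + t * B) := by
      rw [hA, hB]
      linarith
    exact nonneg_of_mul_nonneg_right h5 ht
  by_contra hneg
  push Not at hneg
  have hBpos : 0 < |B| + 1 := by positivity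
  have h := key (min 1 (-A / (2 * (|B| + 1)))) (lt_min one_pos (by apply div_pos <;> linarith))
    (min_le_left _ _)
  have ht0 : 0 < min 1 (-A / (2 * (|B| + 1))) :=
    lt_min one_pos (by apply div_pos <;> linarith)
  have h1 : min 1 (-A / (2 * (|B| + 1))) * B ≤ -A / (2 * (|B| + 1)) * (|B| + 1) := by
    calc _ ≤ min 1 (-A / (2 * (|B| + 1))) * (|B| + 1) :=
          mul_le_mul_of_nonneg_left ((le_abs_self B).trans (by linarith)) ht0.le
      _ ≤ _ := mul_le_mul_of_nonneg_right (min_le_right _ _) hBpos.le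
  have h2 : -A / (2 * (|B| + 1)) * (|B| + 1) = -A / 2 := by field_simp
  linarith

lemma Setup.coercive (S : Setup F Q J wstar lam kappa) (r : Fin p → ℝ) :
    ∃ C, ∀ w, SuppIn J w → lam * OmegaF F w - C ≤ Phi F Q wstar lam r w := by
  refine ⟨∑ i, r i ^ 2 / (2 * kappa) + r ⬝ᵥ wstar, fun w hw => ?_⟩
  have h1 := S.kle _ (hw.sub S.star)
  have h2 : r ⬝ᵥ w = r ⬝ᵥ (w - wstar) + r ⬝ᵥ wstar := by
    rw [← dotProduct_add, sub_add_cancel]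
  have h3 : 0 ≤ kappa / 2 * ((w - wstar) ⬝ᵥ (w - wstar)) - r ⬝ᵥ (w - wstar)
      + ∑ i, r i ^ 2 / (2 * kappa) := by
    simp only [dotProduct, Finset.mul_sum]
    rw [← Finset.sum_sub_distrib, ← Finset.sum_add_distrib]
    refine Finset.sum_nonneg fun i _ => ?_
    have hk := S.kpos
    have : kappa / 2 * ((w - wstar) i * (w - wstar) i) - r i * (w - wstar) i
        + r i ^ 2 / (2 * kappa) = (kappa * (w - wstar) i - r i) ^ 2 / (2 * kappa) := by
      field_simp
      ring
    rw [this]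
    positivity
  unfold Phi
  linarith

lemma Phi_continuous (hF : Good F) (r : Fin p → ℝ) : Continuous (Phi F Q wstar lam r) := by
  have := omega_continuous hF
  unfold Phi
  simp only [dotProduct, Matrix.mulVec]
  fun_prop

lemma Setup.exists_min (S : Setup F Q J wstar lam kappa) {T : Finset (Fin p)} (hT : T ⊆ J)
    (r : Fin p → ℝ) : ∃ v, IsMinIn F Q wstar lam T r v := by
  obtain ⟨C, hC⟩ := S.coercive r
  set K : Set (Fin p → ℝ) :=
    {w | SuppIn T w} ∩ {w | Phi F Q wstar lam r w ≤ Phi F Q wstar lam r 0} with hK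
  have hclosed : IsClosed K := by
    refine IsClosed.inter ?_ (isClosed_le (Phi_continuous S.good r) continuous_const)
    have : {w : Fin p → ℝ | SuppIn T w} = ⋂ (i) (_ : i ∉ T), {w | w i = 0} := by
      ext w; simp [SuppIn]
    rw [this]
    exact isClosed_iInter fun i => isClosed_iInter fun _ =>
      isClosed_eq (continuous_apply i) continuous_const
  have hcomp : IsCompact K := by
    refine IsCompact.of_isClosed_subset (isCompact_univ_pi fun i =>
      isCompact_Icc (a := -((Phi F Q wstar lam r 0 + C) / (lam * F {i})))
        (b := (Phi F Q wstar lam r 0 + C) / (lam * F {i}))) hclosed ?_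
    rintro w ⟨hw, hw2⟩ i -
    rw [Set.mem_Icc, ← abs_le, le_div_iff₀ (mul_pos S.lpos (S.good.pos i))]
    have h1 := hC w (SuppIn.mono hT hw)
    have h2 := mul_le_mul_of_nonneg_left (omega_coord_le S.good w i) S.lpos.le
    have h3 : Phi F Q wstar lam r w ≤ Phi F Q wstar lam r 0 := hw2
    linarith
  obtain ⟨v, hvK, hv⟩ := hcomp.exists_isMinOn ⟨0, SuppIn.zero T,
    le_refl (Phi F Q wstar lam r 0)⟩
    (Phi_continuous S.good r).continuousOn
  refine ⟨v, hvK.1, fun w hw => ?_⟩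
  by_cases h : Phi F Q wstar lam r w ≤ Phi F Q wstar lam r 0
  · exact hv ⟨hw, h⟩
  · exact (show Phi F Q wstar lam r v ≤ _ from hvK.2).trans (not_le.1 h).le

/-- Stability of constrained minimizers under perturbation of `r`; the penalty drops out by
monotonicity of its subdifferential. -/
lemma Setup.min_stability (S : Setup F Q J wstar lam kappa) {T : Finset (Fin p)} (hT : T ⊆ J)
    {r r' v v' : Fin p → ℝ} (hv : IsMinIn F Q wstar lam T r v)
    (hv' : IsMinIn F Q wstar lam T r' v') :
    kappa * ((v' - v) ⬝ᵥ (v' - v)) ≤ (r' - r) ⬝ᵥ (v' - v) := by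
  have h1 := hv.variational S.good S.symm S.lpos hv'.1
  have h2 := hv'.variational S.good S.symm S.lpos hv.1
  have h3 := S.kle _ ((SuppIn.mono hT hv'.1).sub (SuppIn.mono hT hv.1))
  have h4 : grad Q wstar r' v' = grad Q wstar r v + (Q *ᵥ (v' - v) - (r' - r)) := by
    unfold grad
    rw [show v' - wstar = (v - wstar) + (v' - v) by abel, Matrix.mulVec_add]
    abel
  rw [h4, ← neg_sub v' v, dotProduct_neg, add_dotProduct, sub_dotProduct,
    dotProduct_comm (Q *ᵥ (v' - v))] at h2
  linarith

lemma Setup.min_unique (S : Setup F Q J wstar lam kappa) {T : Finset (Fin p)} (hT : T ⊆ J)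
    {r r' v v' : Fin p → ℝ} (hv : IsMinIn F Q wstar lam T r v)
    (hv' : IsMinIn F Q wstar lam T r' v') (hr : ∀ i ∈ T, r i = r' i) : v' = v := by
  have h := S.min_stability hT hv hv'
  have h0 : (r' - r) ⬝ᵥ (v' - v) = 0 := by
    refine Finset.sum_eq_zero fun i _ => ?_
    by_cases hi : i ∈ T
    · simp [hr i hi]
    · simp [hv.1 i hi, hv'.1 i hi]
  rw [h0] at h
  have h1 : (v' - v) ⬝ᵥ (v' - v) ≤ 0 := by
    by_contra hc
    push Not at hc
    exact absurd h (not_le.2 (mul_pos S.kpos hc))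
  have h2 : (v' - v) ⬝ᵥ (v' - v) = 0 :=
    le_antisymm h1 (Finset.sum_nonneg fun i _ => mul_self_nonneg _)
  exact sub_eq_zero.1 (dotProduct_self_eq_zero.1 h2)

/-- The constrained minimizer depends continuously on `r`. -/
lemma Setup.min_continuous (S : Setup F Q J wstar lam kappa) {T : Finset (Fin p)} (hT : T ⊆ J)
    {v : (Fin p → ℝ) → Fin p → ℝ} (hv : ∀ r, IsMinIn F Q wstar lam T r (v r)) :
    Continuous v := by
  have hk := S.kpos
  refine continuous_pi fun i => continuous_iff_continuousAt.2 fun r => ?_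
  rw [ContinuousAt, tendsto_iff_dist_tendsto_zero]
  have hg : Filter.Tendsto (fun r' : Fin p → ℝ => Real.sqrt (∑ j, (r' j - r j) ^ 2) / kappa)
      (nhds r) (nhds 0) := by
    have hc : Continuous fun r' : Fin p → ℝ => Real.sqrt (∑ j, (r' j - r j) ^ 2) / kappa := by
      fun_prop
    simpa using hc.tendsto r
  refine squeeze_zero (fun _ => dist_nonneg) (fun r' => ?_) hg
  rw [Real.dist_eq, le_div_iff₀ hk]
  apply Real.le_sqrt_of_sq_le
  have h := S.min_stability hT (hv r) (hv r')
  set d := v r' - v r with hd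
  have h1 : (r' - r) ⬝ᵥ d ≤ (∑ j, (r' j - r j) ^ 2) / (2 * kappa) + kappa / 2 * (d ⬝ᵥ d) := by
    simp only [dotProduct, Finset.mul_sum, Finset.sum_div]
    rw [← Finset.sum_add_distrib]
    refine Finset.sum_le_sum fun j _ => ?_
    rw [← sub_nonneg, Pi.sub_apply]
    have : (r' j - r j) ^ 2 / (2 * kappa) + kappa / 2 * (d j * d j) - (r' j - r j) * d j
        = ((r' j - r j) - kappa * d j) ^ 2 / (2 * kappa) := by
      field_simp
      ring
    rw [this]
    positivity
  have h2 : d i ^ 2 ≤ d ⬝ᵥ d := by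
    simp only [dotProduct, ← pow_two]
    exact Finset.single_le_sum (f := fun j => d j ^ 2) (fun j _ => sq_nonneg _)
      (Finset.mem_univ i)
  have h3 : kappa / 2 * (d ⬝ᵥ d) ≤ (∑ j, (r' j - r j) ^ 2) / (2 * kappa) := by linarith
  rw [le_div_iff₀ (by positivity)] at h3
  have h4 : (|v r' i - v r i| * kappa) ^ 2 = kappa ^ 2 * d i ^ 2 := by
    rw [mul_pow, sq_abs, hd, Pi.sub_apply]
    ring
  rw [h4]
  have h5 := mul_le_mul_of_nonneg_left h2 (sq_nonneg kappa)
  nlinarith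

end Optimization

/-! ### The extended inverse of `Q_JJ` -/

section ExtInv

open scoped Matrix

variable {p : ℕ}

/-- The block `Q_JJ`, indexed by the subtype. -/
abbrev subJ (Q : Matrix (Fin p) (Fin p) ℝ) (J : Finset (Fin p)) :
    Matrix {j : Fin p // j ∈ J} {j : Fin p // j ∈ J} ℝ :=
  Q.submatrix Subtype.val Subtype.val

/-- The `p × p` matrix whose `J × J` block is `Q_JJ⁻¹` and whose other entries vanish. -/
def extInv (Q : Matrix (Fin p) (Fin p) ℝ) (J : Finset (Fin p)) : Matrix (Fin p) (Fin p) ℝ :=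
  fun i => if h : i ∈ J then extJ J ((subJ Q J)⁻¹ ⟨i, h⟩) else 0

variable {Q : Matrix (Fin p) (Fin p) ℝ} {J : Finset (Fin p)}

lemma extInv_mulVec (x : Fin p → ℝ) :
    extInv Q J *ᵥ x = extJ J ((subJ Q J)⁻¹ *ᵥ fun i => x i.1) := by
  funext i
  by_cases h : i ∈ J
  · simp only [Matrix.mulVec, dotProduct, extInv, h, extJ, dif_pos]
    have := sum_extJ_mul J ((subJ Q J)⁻¹ ⟨i, h⟩) x
    simp only [extJ] at this
    simp_rw [mul_comm _ (x _)]
    exact this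
  · simp [Matrix.mulVec, extInv, h, extJ]

lemma suppIn_extJ (v : {j : Fin p // j ∈ J} → ℝ) : SuppIn J (extJ J v) :=
  fun _ hi => extJ_of_notMem v hi

lemma extInv_supp (x : Fin p → ℝ) : SuppIn J (extInv Q J *ᵥ x) := by
  rw [extInv_mulVec]
  exact suppIn_extJ _

lemma extInv_symm (hQ : Qᵀ = Q) : (extInv Q J)ᵀ = extInv Q J := by
  have h : ((subJ Q J)⁻¹)ᵀ = (subJ Q J)⁻¹ := by
    rw [Matrix.transpose_nonsing_inv]
    congr 1
    ext i j
    exact congrFun (congrFun hQ i.1) j.1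
  ext i j
  by_cases hi : i ∈ J <;> by_cases hj : j ∈ J <;> simp [Matrix.transpose_apply, extInv, extJ, hi, hj]
  exact congrFun (congrFun h ⟨i, hi⟩) ⟨j, hj⟩

lemma mulVec_extJ (d : {j : Fin p // j ∈ J} → ℝ) (i : {j : Fin p // j ∈ J}) :
    (Q *ᵥ extJ J d) i.1 = (subJ Q J *ᵥ d) i :=
  sum_extJ_mul J d (Q i.1)

variable {F : Finset (Fin p) → ℝ} {wstar : Fin p → ℝ} {lam kappa : ℝ}

lemma Setup.isUnit_subJ (S : Setup F Q J wstar lam kappa) : IsUnit (subJ Q J) := by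
  rw [← Matrix.mulVec_injective_iff_isUnit]
  intro x y hxy
  have h0 : subJ Q J *ᵥ (x - y) = 0 := by
    rw [Matrix.mulVec_sub]; exact sub_eq_zero.2 hxy
  have h1 := S.kle _ (suppIn_extJ (x - y))
  have h2 : extJ J (x - y) ⬝ᵥ (Q *ᵥ extJ J (x - y)) = 0 := by
    rw [dotProduct_comm]
    simp only [dotProduct]
    rw [sum_extJ_mul]
    refine Finset.sum_eq_zero fun i _ => ?_
    rw [mulVec_extJ, h0]
    simp
  rw [h2] at h1
  have h3 : extJ J (x - y) ⬝ᵥ extJ J (x - y) ≤ 0 := by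
    by_contra hc
    push Not at hc
    exact absurd h1 (not_le.2 (mul_pos S.kpos hc))
  have h4 : extJ J (x - y) = 0 := dotProduct_self_eq_zero.1
    (le_antisymm h3 (Finset.sum_nonneg fun i _ => mul_self_nonneg _))
  refine sub_eq_zero.1 (funext fun i => ?_)
  rw [← extJ_val J (x - y) i, h4]
  rfl

lemma Setup.extInv_left (S : Setup F Q J wstar lam kappa) {d : Fin p → ℝ} (hd : SuppIn J d) :
    extInv Q J *ᵥ (Q *ᵥ d) = d := by
  conv_rhs => rw [← extJ_restrict hd]
  rw [extInv_mulVec]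
  congr 1
  have h : (fun i : {j : Fin p // j ∈ J} => (Q *ᵥ d) i.1) = subJ Q J *ᵥ fun i => d i.1 := by
    funext i
    rw [← mulVec_extJ, extJ_restrict hd]
  rw [h, Matrix.mulVec_mulVec,
    Matrix.nonsing_inv_mul _ ((Matrix.isUnit_iff_isUnit_det _).1 S.isUnit_subJ),
    Matrix.one_mulVec]

lemma Setup.extInv_right (S : Setup F Q J wstar lam kappa) (x : Fin p → ℝ) {i : Fin p}
    (hi : i ∈ J) : (Q *ᵥ (extInv Q J *ᵥ x)) i = x i := by
  have hs : SuppIn J (Pi.single i (1 : ℝ)) := by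
    intro j hj
    exact Pi.single_eq_of_ne (fun h : j = i => hj (by rw [h]; exact hi)) _
  have h1 : Pi.single i (1 : ℝ) ⬝ᵥ (Q *ᵥ (extInv Q J *ᵥ x)) = x ⬝ᵥ Pi.single i (1 : ℝ) := by
    rw [symm_dot S.symm, dotProduct_comm, symm_dot (extInv_symm S.symm),
      S.extInv_left hs]
  simpa using h1

lemma Setup.extInv_mul (S : Setup F Q J wstar lam kappa) :
    extInv Q J * Q * extInv Q J = extInv Q J := by
  apply Matrix.mulVec_injective
  funext x
  rw [← Matrix.mulVec_mulVec, ← Matrix.mulVec_mulVec]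
  exact S.extInv_left (extInv_supp x)

end ExtInv

/-! ### The deterministic part: the primal-dual witness -/

section Witness

open scoped Matrix

variable {p : ℕ} {F : Finset (Fin p) → ℝ} {Q : Matrix (Fin p) (Fin p) ℝ} {J : Finset (Fin p)}
  {wstar : Fin p → ℝ} {lam kappa : ℝ}

/-- The gradient at the constrained minimizer has `Ω_J*`-norm at most `λ`. -/
lemma IsMinIn.abs_grad_le (S : Setup F Q J wstar lam kappa) {r v : Fin p → ℝ}
    (hv : IsMinIn F Q wstar lam J r v) {w : Fin p → ℝ} (hw : SuppIn J w) :
    |grad Q wstar r v ⬝ᵥ w| ≤ lam * OmegaF F w := by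
  have key : ∀ w, SuppIn J w → -(grad Q wstar r v ⬝ᵥ w) ≤ lam * OmegaF F w := by
    intro w hw
    have h := hv.variational S.good S.symm S.lpos (hv.1.add hw)
    rw [add_sub_cancel_left] at h
    have h2 := omega_add_le S.good v w
    have h3 : lam * (OmegaF F (v + w) - OmegaF F v) ≤ lam * OmegaF F w :=
      mul_le_mul_of_nonneg_left (by linarith) S.lpos.le
    linarith
  rw [abs_le]
  have h1 := key w hw
  have h2 := key (-w) (by simpa using hw.smul (-1))
  rw [omega_neg S.good, dotProduct_neg] at h2
  constructor <;> linarith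

/-- The gradient at the constrained minimizer determines its distance to `wstar`. -/
lemma IsMinIn.sub_eq (S : Setup F Q J wstar lam kappa) {r v : Fin p → ℝ}
    (hv : IsMinIn F Q wstar lam J r v) :
    v - wstar = extInv Q J *ᵥ (grad Q wstar r v + r) := by
  rw [grad, sub_add_cancel, S.extInv_left (hv.1.sub S.star)]

lemma Setup.sqrt_extInv_le (S : Setup F Q J wstar lam kappa) (j : Fin p) :
    Real.sqrt ((extInv Q J *ᵥ Pi.single j 1) ⬝ᵥ (extInv Q J *ᵥ Pi.single j 1)) * kappa ≤ 1 := by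
  set v := extInv Q J *ᵥ Pi.single j 1 with hv
  have h1 := S.kle v (extInv_supp _)
  have h2 : v ⬝ᵥ (Q *ᵥ v) = v j := by
    rw [dotProduct_comm]
    conv_lhs => rw [hv]
    rw [symm_dot (extInv_symm S.symm), S.extInv_left (extInv_supp _)]
    simp [hv]
  have h3 : 0 ≤ v ⬝ᵥ v := Finset.sum_nonneg fun i _ => mul_self_nonneg _
  have h4 : v j ≤ Real.sqrt (v ⬝ᵥ v) := by
    apply Real.le_sqrt_of_sq_le
    rw [pow_two]
    exact Finset.single_le_sum (f := fun i => v i * v i) (fun i _ => mul_self_nonneg _)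
      (Finset.mem_univ j)
  rw [h2] at h1
  set a := Real.sqrt (v ⬝ᵥ v) with ha
  have h5 : a * a = v ⬝ᵥ v := Real.mul_self_sqrt h3
  rw [← h5] at h1
  have ha0 : 0 ≤ a := Real.sqrt_nonneg _
  by_contra hc
  push Not at hc
  have ha1 : 0 < a := by
    rcases ha0.eq_or_lt with h | h
    · rw [← h] at hc; linarith
    · exact h
  have := mul_lt_mul_of_pos_left hc ha1
  nlinarith

/-- The constrained minimizer is uniformly close to `wstar`, hence does not lose any coordinate of
its support. -/
lemma IsMinIn.supp_subset (S : Setup F Q J wstar lam kappa) {nu : ℝ} (hnupos : 0 < nu)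
    (hnu : ∀ j, wstar j ≠ 0 → nu ≤ |wstar j|) (hlam : lam * (2 * cJ F J) ≤ kappa * nu)
    {r v : Fin p → ℝ} (hA : ∀ w, SuppIn J w → r ⬝ᵥ w ≤ lam / 2 * OmegaF F w)
    (hv : IsMinIn F Q wstar lam J r v) : suppF wstar ⊆ suppF v := by
  intro j hj
  simp only [suppF, Finset.mem_filter, Finset.mem_univ, true_and] at hj ⊢
  intro hvj
  set e := extInv Q J *ᵥ Pi.single j 1 with he
  have hes : SuppIn J e := extInv_supp _
  have h1 : (v - wstar) j = grad Q wstar r v ⬝ᵥ e + r ⬝ᵥ e := by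
    rw [← add_dotProduct, he, symm_dot (extInv_symm S.symm), ← hv.sub_eq S]
    simp
  have h2 := abs_le.1 (hv.abs_grad_le S hes)
  have h3 := hA e hes
  have h4 := hA (-e) (by simpa using hes.smul (-1))
  rw [omega_neg S.good, dotProduct_neg] at h4
  have h5 : |wstar j| ≤ 3 / 2 * lam * OmegaF F e := by
    have : |wstar j| = |(v - wstar) j| := by simp [hvj]
    rw [this, h1, abs_le]
    constructor <;> linarith [h2.1, h2.2]
  have h6 : OmegaF F e ≤ cJ F J * Real.sqrt (e ⬝ᵥ e) := by
    have h7 := omega_le_cJ S.good J fun i => e i.1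
    rw [omega_restrict S.good, extJ_restrict hes] at h7
    have h8 : ∑ i : {x : Fin p // x ∈ J}, e i.1 ^ 2 = e ⬝ᵥ e := by
      rw [sum_subtype_J J fun i => e i ^ 2]
      simp only [dotProduct, ← pow_two]
      exact Finset.sum_subset (Finset.subset_univ J) fun i _ hi => by simp [hes i hi]
    rwa [h8] at h7
  have h9 := S.sqrt_extInv_le j
  rw [← he] at h9
  set a := Real.sqrt (e ⬝ᵥ e)
  have ha : 0 ≤ a := Real.sqrt_nonneg _
  have h10 : |wstar j| ≤ 3 / 2 * lam * (cJ F J * a) :=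
    h5.trans (mul_le_mul_of_nonneg_left h6 (by linarith [S.lpos]))
  have h11 : lam * (2 * cJ F J) * a ≤ kappa * nu * a := mul_le_mul_of_nonneg_right hlam ha
  have h12 : a * kappa * nu ≤ 1 * nu := mul_le_mul_of_nonneg_right h9 hnupos.le
  have := hnu j hj
  nlinarith

/-- A set strictly between the support of `wstar` and `J` can be enlarged inside `J` without
increasing `F`. -/
lemma exists_unstable (hF : Good F) (hJ : StableSet F J)
    (hJmin : ∀ J' : Finset (Fin p), StableSet F J' → suppF wstar ⊆ J' → J ⊆ J')
    {K : Finset (Fin p)} (hKJ : K ⊆ J) (hK : suppF wstar ⊆ K) (hne : K ≠ J) :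
    ∃ k ∈ J, k ∉ K ∧ F (insert k K) ≤ F K := by
  have hnst : ¬ StableSet F K := fun h => hne (hKJ.antisymm (hJmin K h hK))
  unfold StableSet at hnst
  push Not at hnst
  obtain ⟨B, hKB, hKB', hFB⟩ := hnst
  have hBJ : B ⊆ J := by
    by_contra hc
    have h1 : F J < F (B ∪ J) := hJ _ Finset.subset_union_right fun h =>
      hc (by rw [h]; exact Finset.subset_union_left)
    have h2 := hF.subm B J
    have h3 := hF.mono (Finset.subset_inter hKB hKJ)
    linarith
  obtain ⟨k, hkB, hkK⟩ := Finset.exists_of_ssubset (hKB.ssubset_of_ne hKB')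
  exact ⟨k, hBJ hkB, hkK,
    (hF.mono (Finset.insert_subset hkB hKB)).trans hFB⟩

/-- If activating coordinate `k` costs nothing in `Ω`, the gradient of the smooth part in direction
`k` vanishes at the constrained minimizer. -/
lemma IsMinIn.grad_eq_zero (S : Setup F Q J wstar lam kappa) {r v : Fin p → ℝ}
    (hv : IsMinIn F Q wstar lam J r v) {k : Fin p} (hkJ : k ∈ J) (hk : k ∉ suppF v)
    (hFk : F (insert k (suppF v)) ≤ F (suppF v)) : grad Q wstar r v k = 0 := by
  have hvk : v k = 0 := by simpa [suppF] using hk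
  -- a radius below all nonzero entries of `v`
  obtain ⟨δ, hδ, hδv⟩ : ∃ δ : ℝ, 0 < δ ∧ ∀ i, v i ≠ 0 → δ < |v i| := by
    by_cases hne : (suppF v).Nonempty
    · obtain ⟨i₀, hi₀, hmin⟩ := Finset.exists_min_image (suppF v) (fun i => |v i|) hne
      have h0 : 0 < |v i₀| := abs_pos.2 (by simpa [suppF] using hi₀)
      refine ⟨|v i₀| / 2, by linarith, fun i hi => ?_⟩
      have := hmin i (by simpa [suppF] using hi)
      linarith
    · refine ⟨1, one_pos, fun i hi => absurd ⟨i, ?_⟩ hne⟩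
      simpa [suppF] using hi
  have key : ∀ t : ℝ, |t| ≤ δ → 0 ≤ t * grad Q wstar r v k := by
    intro t ht
    have hw : SuppIn J (v + Pi.single k t) := hv.1.add fun j hj =>
      Pi.single_eq_of_ne (fun h : j = k => hj (by rw [h]; exact hkJ)) _
    have h1 := hv.variational S.good S.symm S.lpos hw
    have h2 := omega_add_single_le S.good hvk hFk (t := t)
      fun i hi => ht.trans_lt (hδv i hi)
    rw [add_sub_cancel_left, dotProduct_single] at h1
    have h3 : lam * (OmegaF F (v + Pi.single k t) - OmegaF F v) ≤ 0 :=
      mul_nonpos_of_nonneg_of_nonpos S.lpos.le (by linarith)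
    linarith
  have h1 := key δ (abs_of_pos hδ).le
  have h2 := key (-δ) (by rw [abs_neg]; exact (abs_of_pos hδ).le)
  have h3 : δ * grad Q wstar r v k = 0 := by linarith
  exact (mul_eq_zero.1 h3).resolve_left hδ.ne'

/-- The constrained minimizer is the strict global minimizer: the irrepresentability condition
leaves a margin in the dual certificate on `Jᶜ`. -/
lemma IsMinIn.global (S : Setup F Q J wstar lam kappa) (hJ : StableSet F J) {eta : ℝ}
    (heta : 0 < eta)
    (hcond : ∀ h : {x : Fin p // x ∈ Jᶜ} → ℝ,
      ∑ j, OmegaF F (extInv Q J *ᵥ fun i => Q i j.1) * h j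
        ≤ (1 - eta) * OmegaF (Fcontract F J) h)
    {r v : Fin p → ℝ}
    (hB : ∀ h : {x : Fin p // x ∈ Jᶜ} → ℝ,
      ∑ j, (r - Q *ᵥ (extInv Q J *ᵥ r)) j.1 * h j ≤ lam * eta / 2 * OmegaF (Fcontract F J) h)
    (hv : IsMinIn F Q wstar lam J r v) {w : Fin p → ℝ} (hw : w ≠ v) :
    Phi F Q wstar lam r v < Phi F Q wstar lam r w := by
  have hG := good_contract S.good hJ
  set g := grad Q wstar r v with hg
  set hJc : {x : Fin p // x ∈ Jᶜ} → ℝ := fun i => w i.1 with hJcdef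
  set wJ : Fin p → ℝ := extJ J fun i => w i.1 with hwJ
  set N := OmegaF (Fcontract F J) hJc with hN
  have hsplit : w = wJ + extJ Jᶜ hJc := by
    funext i
    by_cases hi : i ∈ J <;> simp [hwJ, extJ, hi, hJcdef]
  -- the gradient on `Jᶜ`
  have hgJc : ∀ j, g j = g ⬝ᵥ (extInv Q J *ᵥ fun i => Q i j)
      - (r - Q *ᵥ (extInv Q J *ᵥ r)) j := by
    intro j
    have h1 : g j = (Q *ᵥ (extInv Q J *ᵥ g)) j + (Q *ᵥ (extInv Q J *ᵥ r)) j - r j := by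
      rw [← Pi.add_apply (Q *ᵥ _), ← Matrix.mulVec_add, ← Matrix.mulVec_add, ← hv.sub_eq S]
      rfl
    have h2 : (Q *ᵥ (extInv Q J *ᵥ g)) j = g ⬝ᵥ (extInv Q J *ᵥ fun i => Q i j) := by
      have h3 : (fun i => Q i j) = Q j := by
        funext i
        exact congrFun (congrFun S.symm j) i
      rw [h3, symm_dot (extInv_symm S.symm)]
      rfl
    rw [h1, h2, Pi.sub_apply]
    ring
  have hlow : -(lam * (1 - eta / 2) * N) ≤ g ⬝ᵥ extJ Jᶜ hJc := by
    have h1 : g ⬝ᵥ extJ Jᶜ hJc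
        = ∑ j : {x : Fin p // x ∈ Jᶜ}, (g ⬝ᵥ (extInv Q J *ᵥ fun i => Q i j.1)) * hJc j
          - ∑ j : {x : Fin p // x ∈ Jᶜ}, (r - Q *ᵥ (extInv Q J *ᵥ r)) j.1 * hJc j := by
      rw [← Finset.sum_sub_distrib]
      refine (sum_extJ_mul Jᶜ hJc g).trans (Finset.sum_congr rfl fun j _ => ?_)
      rw [hgJc j.1]
      ring
    have h2 : -(∑ j : {x : Fin p // x ∈ Jᶜ}, (g ⬝ᵥ (extInv Q J *ᵥ fun i => Q i j.1)) * hJc j)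
        ≤ lam * ∑ j : {x : Fin p // x ∈ Jᶜ},
          OmegaF F (extInv Q J *ᵥ fun i => Q i j.1) * |hJc j| := by
      rw [← Finset.sum_neg_distrib, Finset.mul_sum]
      refine Finset.sum_le_sum fun j _ => ?_
      refine (neg_le_abs _).trans ?_
      rw [abs_mul, ← mul_assoc]
      exact mul_le_mul_of_nonneg_right (hv.abs_grad_le S (extInv_supp _)) (abs_nonneg _)
    have h3 := hcond fun j => |hJc j|
    have h4 : OmegaF (Fcontract F J) (fun j => |hJc j|) = N :=
      le_antisymm (omega_le_of_abs_le hG fun i => by simp)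
        (omega_le_of_abs_le hG fun i => by simp)
    rw [h4] at h3
    have h5 := hB hJc
    have h6 := mul_le_mul_of_nonneg_left h3 S.lpos.le
    rw [h1]
    linarith
  have hdec := omega_decomp S.good hJ w
  rw [omega_restrict S.good] at hdec
  have hvar := hv.variational S.good S.symm S.lpos (suppIn_extJ fun i => w i.1)
  have hexp := Phi_expand (F := F) (wstar := wstar) (lam := lam) S.symm r v w
  have hgs : g ⬝ᵥ (w - v) = g ⬝ᵥ (wJ - v) + g ⬝ᵥ extJ Jᶜ hJc := by
    rw [← dotProduct_add]
    congr 1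
    rw [hsplit]
    simp only [hwJ]
    have : extJ J (fun i => (extJ J (fun i => w i.1) + extJ Jᶜ hJc) i.1)
        = extJ J fun i => w i.1 := by
      rw [← hwJ, ← hsplit]
    abel
  have hlam := mul_le_mul_of_nonneg_left hdec S.lpos.le
  have hN0 : 0 ≤ N := omega_nonneg hG _
  have hmain : (1 / 2) * ((w - v) ⬝ᵥ (Q *ᵥ (w - v))) + lam * eta / 2 * N
      ≤ Phi F Q wstar lam r w - Phi F Q wstar lam r v := by
    rw [hexp, ← hg, hgs]
    linarith
  have hpsd := S.psd (w - v)
  have hle := S.lpos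
  rcases hN0.eq_or_lt with h0 | h0
  · -- then `w` is supported in `J`, where the quadratic form is definite
    have hz : hJc = 0 := omega_eq_zero hG (hN ▸ h0.symm.le)
    have hwJ' : SuppIn J w := fun i hi =>
      congrFun hz (⟨i, Finset.mem_compl.2 hi⟩ : {x : Fin p // x ∈ Jᶜ})
    have h1 := S.kle _ (hwJ'.sub hv.1)
    have h2 : 0 < (w - v) ⬝ᵥ (w - v) := by
      refine lt_of_le_of_ne (Finset.sum_nonneg fun i _ => mul_self_nonneg _) fun h => hw ?_
      exact sub_eq_zero.1 (dotProduct_self_eq_zero.1 h.symm)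
    have h3 := mul_pos S.kpos h2
    rw [← h0] at hmain
    linarith
  · have h1 : 0 < lam * eta / 2 * N := by positivity
    linarith

/-- Recovery of `J` for every noise correlation `r` which is small in the relevant dual norms and
avoids the hyperplane-like sets where a constrained minimizer has a vanishing partial
derivative. -/
lemma Setup.recovery (S : Setup F Q J wstar lam kappa) (hJ : StableSet F J)
    (hJmin : ∀ J' : Finset (Fin p), StableSet F J' → suppF wstar ⊆ J' → J ⊆ J')
    {nu : ℝ} (hnupos : 0 < nu) (hnu : ∀ j, wstar j ≠ 0 → nu ≤ |wstar j|)
    (hlam : lam * (2 * cJ F J) ≤ kappa * nu) {eta : ℝ} (heta : 0 < eta)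
    (hcond : ∀ h : {x : Fin p // x ∈ Jᶜ} → ℝ,
      ∑ j, OmegaF F (extInv Q J *ᵥ fun i => Q i j.1) * h j
        ≤ (1 - eta) * OmegaF (Fcontract F J) h)
    {r : Fin p → ℝ} (hA : ∀ w, SuppIn J w → r ⬝ᵥ w ≤ lam / 2 * OmegaF F w)
    (hB : ∀ h : {x : Fin p // x ∈ Jᶜ} → ℝ,
      ∑ j, (r - Q *ᵥ (extInv Q J *ᵥ r)) j.1 * h j ≤ lam * eta / 2 * OmegaF (Fcontract F J) h)
    (hgen : ∀ k ∈ J, ∀ v, IsMinIn F Q wstar lam (J.erase k) r v → grad Q wstar r v k ≠ 0) :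
    ∃ w, (∀ w', w' ≠ w → Phi F Q wstar lam r w < Phi F Q wstar lam r w') ∧ suppF w = J := by
  obtain ⟨v, hv⟩ := S.exists_min Finset.Subset.rfl r
  refine ⟨v, fun w' hw' => hv.global S hJ heta hcond hB hw', ?_⟩
  by_contra hne
  have hvJ : suppF v ⊆ J := by
    intro i hi
    by_contra hc
    exact (by simpa [suppF] using hi : v i ≠ 0) (hv.1 i hc)
  obtain ⟨k, hkJ, hk, hFk⟩ := exists_unstable S.good hJ hJmin hvJ
    (hv.supp_subset S hnupos hnu hlam hA) hne
  refine hgen k hkJ v ⟨fun i hi => ?_, fun w hw => hv.2 w (hw.mono (Finset.erase_subset k J))⟩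
    (hv.grad_eq_zero S hkJ hk hFk)
  by_cases hik : i = k
  · subst hik; simpa [suppF] using hk
  · exact hv.1 i fun hiJ => hi (Finset.mem_erase.2 ⟨hik, hiJ⟩)

end Witness

/-! ### Standard Gaussian vectors -/

section Gaussian

open scoped Matrix
open ProbabilityTheory

instance (n : ℕ) : IsProbabilityMeasure (stdGaussianPi n) := by
  unfold stdGaussianPi; infer_instance

lemma charFunDual_gaussianReal_zero_one (L : StrongDual ℝ ℝ) :
    charFunDual (gaussianReal 0 1) L = Complex.exp (-(((L 1) ^ 2 : ℝ) : ℂ) / 2) := by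
  have h : charFunDual (gaussianReal 0 1) L = charFun (gaussianReal 0 1) (L 1) := by
    rw [charFunDual_apply, charFun_apply_real]
    refine integral_congr_ae (Filter.Eventually.of_forall fun x => ?_)
    have hx : L x = L 1 * x := by
      conv_lhs => rw [show x = x • (1 : ℝ) by simp, map_smul, smul_eq_mul, mul_comm]
    simp only [hx, Complex.ofReal_mul]
  rw [h, charFun_gaussianReal]
  congr 1
  simp
  ring

lemma charFunDual_map_stdGaussianPi {m n : ℕ} (A : Matrix (Fin m) (Fin n) ℝ)
    (L : StrongDual ℝ (Fin m → ℝ)) :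
    charFunDual (Measure.map (fun g => A *ᵥ g) (stdGaussianPi n)) L =
      Complex.exp (-((((fun j => L (Pi.single j 1)) ⬝ᵥ
        ((A * Aᵀ) *ᵥ fun j => L (Pi.single j 1)) : ℝ)) : ℂ) / 2) := by
  set l : Fin m → ℝ := fun j => L (Pi.single j 1) with hl
  let f : (Fin n → ℝ) →L[ℝ] (Fin m → ℝ) := LinearMap.toContinuousLinearMap (Matrix.mulVecLin A)
  have hL : ∀ x, L x = l ⬝ᵥ x := by
    intro x
    conv_lhs => rw [← Finset.univ_sum_single x]
    rw [map_sum]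
    refine Finset.sum_congr rfl fun j _ => ?_
    rw [show Pi.single j (x j) = x j • (Pi.single j (1 : ℝ) : Fin m → ℝ) by
      rw [← Pi.single_smul]; simp, map_smul, smul_eq_mul, mul_comm]
  have h1 : charFunDual (Measure.map (fun g => A *ᵥ g) (stdGaussianPi n)) L =
      charFunDual (stdGaussianPi n) (L.comp f) :=
    charFunDual_map f L
  rw [h1, stdGaussianPi, charFunDual_pi]
  simp_rw [charFunDual_gaussianReal_zero_one]
  rw [← Complex.exp_sum, ← Finset.sum_div, Finset.sum_neg_distrib, ← Complex.ofReal_sum]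
  congr 4
  have h2 : ∀ i, ((L.comp f).comp (ContinuousLinearMap.single ℝ (fun _ : Fin n => ℝ) i)) 1 =
      (Aᵀ *ᵥ l) i := by
    intro i
    have : ((L.comp f).comp (ContinuousLinearMap.single ℝ (fun _ : Fin n => ℝ) i)) 1 =
        L (A *ᵥ Pi.single i 1) := rfl
    rw [this, hL, Matrix.dotProduct_mulVec, ← Matrix.mulVec_transpose]
    simp
  simp_rw [h2]
  rw [← Matrix.mulVec_mulVec, Matrix.dotProduct_mulVec, ← Matrix.mulVec_transpose]
  exact Finset.sum_congr rfl fun i _ => sq _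

/-- A linear image of a standard Gaussian vector depends only on its covariance. -/
lemma map_stdGaussianPi_eq {m n k : ℕ} (A : Matrix (Fin m) (Fin n) ℝ)
    (B : Matrix (Fin m) (Fin k) ℝ) (h : A * Aᵀ = B * Bᵀ) :
    Measure.map (fun g => A *ᵥ g) (stdGaussianPi n) =
      Measure.map (fun g => B *ᵥ g) (stdGaussianPi k) := by
  have hA : Measurable fun g : Fin n → ℝ => A *ᵥ g :=
    (Matrix.mulVecLin A).continuous_of_finiteDimensional.measurable
  have hB : Measurable fun g : Fin k → ℝ => B *ᵥ g :=
    (Matrix.mulVecLin B).continuous_of_finiteDimensional.measurable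
  have := Measure.isProbabilityMeasure_map (μ := stdGaussianPi n) hA.aemeasurable
  have := Measure.isProbabilityMeasure_map (μ := stdGaussianPi k) hB.aemeasurable
  refine Measure.ext_of_charFunDual (funext fun L => ?_)
  rw [charFunDual_map_stdGaussianPi, charFunDual_map_stdGaussianPi, h]

lemma stdGaussianPi_absolutelyContinuous (n : ℕ) :
    stdGaussianPi n ≪ (volume : Measure (Fin n → ℝ)) := by
  induction n with
  | zero =>
    rw [stdGaussianPi, Measure.pi_of_empty, volume_pi, Measure.pi_of_empty]
  | succ n ih =>
    have h1 := (measurePreserving_piFinSuccAbove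
      (fun _ : Fin (n + 1) => gaussianReal 0 1) 0).symm
    have h2 := (measurePreserving_piFinSuccAbove
      (fun _ : Fin (n + 1) => (volume : Measure ℝ)) 0).symm
    rw [stdGaussianPi, volume_pi, ← h1.map_eq, ← h2.map_eq]
    exact ((gaussianReal_absolutelyContinuous 0 one_ne_zero).prod ih).map
      (MeasurableEquiv.measurable _)

/-- A closed set that meets every line of direction `u` in at most one point is negligible. -/
lemma stdGaussianPi_null {n : ℕ} {E : Set (Fin n → ℝ)} (hE : IsClosed E) (u : Fin n → ℝ)
    (h : ∀ x ∈ E, ∀ t : ℝ, t ≠ 0 → x + t • u ∉ E) : stdGaussianPi n E = 0 := by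
  apply stdGaussianPi_absolutelyContinuous n
  have key := ae_mem_of_ae_add_linearMap_mem (LinearMap.toSpanSingleton ℝ (Fin n → ℝ) u)
    (volume : Measure ℝ) (volume : Measure (Fin n → ℝ)) hE.isOpen_compl.measurableSet
    (fun y => ?_)
  · rw [ae_iff] at key
    simpa using key
  · have hsub : {t : ℝ | ¬ (y + LinearMap.toSpanSingleton ℝ (Fin n → ℝ) u t ∈ Eᶜ)}.Subsingleton := by
      intro s hs t ht
      simp only [LinearMap.toSpanSingleton_apply, Set.mem_compl_iff, not_not,
        Set.mem_ofPred_eq] at hs ht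
      by_contra hne
      refine h _ hs (t - s) (sub_ne_zero.2 (Ne.symm hne)) ?_
      rw [add_assoc, ← add_smul, add_sub_cancel]
      exact ht
    rw [ae_iff]
    exact hsub.measure_zero _

end Gaussian

/-! ### The random events -/

section Events

open scoped Matrix

variable {p n : ℕ} {F : Finset (Fin p) → ℝ} {Q : Matrix (Fin p) (Fin p) ℝ} {J : Finset (Fin p)}
  {wstar : Fin p → ℝ} {lam kappa : ℝ}

/-- The correlation `σ Xᵀε / n` of the noise `σ ε` with the design. -/
def noiseCorr (X : Matrix (Fin n) (Fin p) ℝ) (sigma : ℝ) (ε : Fin n → ℝ) : Fin p → ℝ :=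
  (sigma / n) • (Xᵀ *ᵥ ε)

/-- Almost surely, for `k ∈ J`, the minimizer over vectors supported in `J \ {k}` has a nonzero
`k`-th partial derivative. Moving the noise along `X Q_JJ⁻¹ e_k` changes only the `k`-th coordinate
of the correlation within `J`: the minimizer stays put and the derivative varies strictly, so each
such line carries at most one exceptional noise vector. -/
lemma Setup.null_exceptional (S : Setup F Q J wstar lam kappa) (hn : 1 ≤ n)
    {X : Matrix (Fin n) (Fin p) ℝ} (hQ : Q = ((n : ℝ)⁻¹) • (Xᵀ * X)) {sigma : ℝ}
    (hsigma : 0 < sigma) {k : Fin p} (hk : k ∈ J) :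
    stdGaussianPi n {ε | ∃ v, IsMinIn F Q wstar lam (J.erase k) (noiseCorr X sigma ε) v ∧
      grad Q wstar (noiseCorr X sigma ε) v k = 0} = 0 := by
  have hT : J.erase k ⊆ J := Finset.erase_subset k J
  have hex := fun r => S.exists_min hT r
  choose v hv using hex
  have hvc : Continuous v := S.min_continuous hT hv
  have hrc : Continuous (noiseCorr X sigma) :=
    ((Matrix.mulVecLin Xᵀ).continuous_of_finiteDimensional).const_smul (sigma / n)
  let E : Set (Fin n → ℝ) :=
    {ε | grad Q wstar (noiseCorr X sigma ε) (v (noiseCorr X sigma ε)) k = 0}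
  have hE : IsClosed E := by
    have hc : Continuous fun ε => grad Q wstar (noiseCorr X sigma ε)
        (v (noiseCorr X sigma ε)) k := by
      have h1 : Continuous fun ε => Q *ᵥ (v (noiseCorr X sigma ε) - wstar) :=
        (Matrix.mulVecLin Q).continuous_of_finiteDimensional.comp
          ((hvc.comp hrc).sub continuous_const)
      exact (continuous_apply k).comp (h1.sub hrc)
    exact isClosed_eq hc continuous_const
  refine measure_mono_null (t := E) ?_ (stdGaussianPi_null hE
    (X *ᵥ (extInv Q J *ᵥ Pi.single k 1)) ?_)
  · rintro ε ⟨v', hv', h0⟩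
    have : v (noiseCorr X sigma ε) = v' := S.min_unique hT hv' (hv _) fun _ _ => rfl
    change grad Q wstar (noiseCorr X sigma ε) (v (noiseCorr X sigma ε)) k = 0
    rw [this]
    exact h0
  · intro ε hε t ht hε'
    have hn0 : (n : ℝ) ≠ 0 := by positivity
    have hr : noiseCorr X sigma (ε + t • (X *ᵥ (extInv Q J *ᵥ Pi.single k 1))) =
        noiseCorr X sigma ε + (sigma * t) • (Q *ᵥ (extInv Q J *ᵥ Pi.single k 1)) := by
      have hXX : Xᵀ *ᵥ (X *ᵥ (extInv Q J *ᵥ Pi.single k 1)) =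
          (n : ℝ) • (Q *ᵥ (extInv Q J *ᵥ Pi.single k 1)) := by
        rw [Matrix.mulVec_mulVec]
        conv_rhs => rw [← Matrix.smul_mulVec]
        congr 1
        conv_rhs => rw [hQ]
        rw [smul_smul, mul_inv_cancel₀ hn0, one_smul]
      rw [noiseCorr, noiseCorr, Matrix.mulVec_add, Matrix.mulVec_smul, hXX, smul_add, smul_smul,
        smul_smul]
      congr 2
      field_simp
    have hcoord : ∀ i ∈ J, noiseCorr X sigma (ε + t • (X *ᵥ (extInv Q J *ᵥ Pi.single k 1))) i =
        noiseCorr X sigma ε i + sigma * t * (Pi.single k (1 : ℝ) : Fin p → ℝ) i := by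
      intro i hi
      rw [hr, Pi.add_apply, Pi.smul_apply, S.extInv_right _ hi, smul_eq_mul]
    have hveq : v (noiseCorr X sigma (ε + t • (X *ᵥ (extInv Q J *ᵥ Pi.single k 1)))) =
        v (noiseCorr X sigma ε) := by
      refine S.min_unique hT (hv _) (hv _) fun i hi => ?_
      rw [hcoord i (hT hi), Pi.single_eq_of_ne (Finset.ne_of_mem_erase hi)]
      ring
    change grad Q wstar _ _ k = 0 at hε hε'
    rw [hveq] at hε'
    simp only [grad, Pi.sub_apply] at hε hε'
    rw [hcoord k hk, Pi.single_eq_same] at hε'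
    have : sigma * t ≠ 0 := mul_ne_zero hsigma.ne' ht
    apply this
    linarith

/-- The reflection `1 - 2 Q Q_JJ⁻¹`, with `Q_JJ⁻¹` extended by zero, preserves the
covariance `Q`. -/
lemma Setup.reflection_mul (S : Setup F Q J wstar lam kappa) :
    (1 - (2 : ℝ) • (Q * extInv Q J)) * Q * (1 - (2 : ℝ) • (Q * extInv Q J))ᵀ = Q := by
  have h : Q * extInv Q J * Q * (extInv Q J * Q) = Q * extInv Q J * Q := by
    calc Q * extInv Q J * Q * (extInv Q J * Q)
        = Q * (extInv Q J * Q * extInv Q J) * Q := by simp only [Matrix.mul_assoc]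
      _ = Q * extInv Q J * Q := by rw [S.extInv_mul]
  rw [Matrix.transpose_sub, Matrix.transpose_smul, Matrix.transpose_mul, S.symm,
    extInv_symm S.symm, Matrix.transpose_one]
  simp only [Matrix.sub_mul, Matrix.mul_sub, Matrix.smul_mul, Matrix.mul_smul, Matrix.one_mul,
    Matrix.mul_one, h]
  rw [← Matrix.mul_assoc]
  module

lemma smul_dot_le (hF : Good F) {τ c : ℝ} (hc : 0 ≤ c) {z : Fin p → ℝ}
    (hz : dualNorm (OmegaF F) z ≤ τ) (w : Fin p → ℝ) :
    (c • z) ⬝ᵥ w ≤ c * τ * OmegaF F w := by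
  have h2 : (c • z) ⬝ᵥ w = c * ∑ i, z i * w i := by
    rw [smul_dotProduct]; rfl
  rw [h2, mul_assoc]
  exact mul_le_mul_of_nonneg_left ((sum_mul_le_dualNorm hF z w).trans
    (mul_le_mul_of_nonneg_right hz (omega_nonneg hF w))) hc

lemma lsObj_eq (hn : 1 ≤ n) {X : Matrix (Fin n) (Fin p) ℝ} (hQ : Q = ((n : ℝ)⁻¹) • (Xᵀ * X))
    (sigma : ℝ) (ε : Fin n → ℝ) (w : Fin p → ℝ) :
    lsObj F X lam (fun i => X.mulVec wstar i + sigma * ε i) w =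
      Phi F Q wstar lam (noiseCorr X sigma ε) w +
        (noiseCorr X sigma ε ⬝ᵥ wstar + sigma ^ 2 / (2 * n) * (ε ⬝ᵥ ε)) := by
  have hn0 : (n : ℝ) ≠ 0 := by positivity
  set d := w - wstar with hd
  have hy : ∑ i, (X.mulVec wstar i + sigma * ε i - X.mulVec w i) ^ 2 =
      (sigma • ε - X *ᵥ d) ⬝ᵥ (sigma • ε - X *ᵥ d) := by
    refine Finset.sum_congr rfl fun i _ => ?_
    rw [hd, Matrix.mulVec_sub]
    simp only [Pi.sub_apply, Pi.smul_apply, smul_eq_mul]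
    ring
  have hXd : d ⬝ᵥ (Q *ᵥ d) = (n : ℝ)⁻¹ * ((X *ᵥ d) ⬝ᵥ (X *ᵥ d)) := by
    rw [hQ, Matrix.smul_mulVec, dotProduct_smul, ← Matrix.mulVec_mulVec, Matrix.dotProduct_mulVec,
      Matrix.vecMul_transpose, smul_eq_mul]
  have hr : noiseCorr X sigma ε ⬝ᵥ w - noiseCorr X sigma ε ⬝ᵥ wstar =
      sigma / n * (ε ⬝ᵥ (X *ᵥ d)) := by
    rw [← dotProduct_sub, noiseCorr, smul_dotProduct, Matrix.mulVec_transpose,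
      ← Matrix.dotProduct_mulVec, smul_eq_mul]
  simp only [lsObj, Phi, hy, ← hd, hXd]
  have hr' : noiseCorr X sigma ε ⬝ᵥ w =
      noiseCorr X sigma ε ⬝ᵥ wstar + sigma / n * (ε ⬝ᵥ (X *ᵥ d)) := by linarith
  rw [hr']
  simp only [sub_dotProduct, dotProduct_sub, smul_dotProduct, dotProduct_smul, smul_eq_mul,
    dotProduct_comm (X *ᵥ d) ε]
  field_simp
  ring

/-- The deterministic conclusion on the event where the correlation `c z` and its reflection both
have small dual norm: their mean `(r + r') / 2` is `r - Q Q_JJ⁻¹ r_J`, the correlation outside `J`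
left after regression on `J`. -/
lemma Setup.recovery_of_dualNorm (S : Setup F Q J wstar lam kappa) (hJ : StableSet F J)
    (hJmin : ∀ J' : Finset (Fin p), StableSet F J' → suppF wstar ⊆ J' → J ⊆ J')
    {nu : ℝ} (hnupos : 0 < nu) (hnu : ∀ j, wstar j ≠ 0 → nu ≤ |wstar j|)
    (hlam : lam * (2 * cJ F J) ≤ kappa * nu) {eta : ℝ} (heta : 0 < eta) (heta1 : eta ≤ 1)
    (hcond : ∀ h : {x : Fin p // x ∈ Jᶜ} → ℝ,
      ∑ j, OmegaF F (extInv Q J *ᵥ fun i => Q i j.1) * h j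
        ≤ (1 - eta) * OmegaF (Fcontract F J) h)
    {c τ : ℝ} (hc : 0 ≤ c) (hcτ : c * τ = lam * eta * rhoJ F J / 2) {r z : Fin p → ℝ}
    (hr : r = c • z) (hz : dualNorm (OmegaF F) z ≤ τ)
    (hz' : dualNorm (OmegaF F) ((1 - (2 : ℝ) • (Q * extInv Q J)) *ᵥ z) ≤ τ)
    (hgen : ∀ k ∈ J, ∀ v, IsMinIn F Q wstar lam (J.erase k) r v → grad Q wstar r v k ≠ 0) :
    ∃ w, (∀ w', w' ≠ w → Phi F Q wstar lam r w < Phi F Q wstar lam r w') ∧ suppF w = J := by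
  obtain ⟨hρ0, hρ1, -⟩ := rhoJ_spec S.good hJ
  have hl := S.lpos
  have h1 := smul_dot_le S.good hc hz
  have h2 := smul_dot_le S.good hc hz'
  rw [hcτ, ← hr] at h1
  rw [hcτ, ← Matrix.mulVec_smul, ← hr] at h2
  refine S.recovery hJ hJmin hnupos hnu hlam heta hcond (fun w _ => ?_) (fun h => ?_) hgen
  · refine (h1 w).trans (mul_le_mul_of_nonneg_right ?_ (omega_nonneg S.good w))
    have : lam * (eta * rhoJ F J) ≤ lam * 1 :=
      mul_le_mul_of_nonneg_left (mul_le_one₀ heta1 hρ0.le hρ1) hl.le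
    linarith
  · have hmean : (r - Q *ᵥ (extInv Q J *ᵥ r)) =
        (1 / 2 : ℝ) • (r + (1 - (2 : ℝ) • (Q * extInv Q J)) *ᵥ r) := by
      rw [Matrix.sub_mulVec, Matrix.one_mulVec, Matrix.smul_mulVec, ← Matrix.mulVec_mulVec]
      module
    have h3 : ∑ j : {x : Fin p // x ∈ Jᶜ}, (r - Q *ᵥ (extInv Q J *ᵥ r)) j.1 * h j =
        (r - Q *ᵥ (extInv Q J *ᵥ r)) ⬝ᵥ extJ Jᶜ h :=
      (sum_extJ_mul Jᶜ h _).symm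
    rw [h3, hmean, smul_dotProduct, add_dotProduct, smul_eq_mul]
    have h4 := h1 (extJ Jᶜ h)
    have h5 := h2 (extJ Jᶜ h)
    have h6 : lam * eta / 2 * (rhoJ F J * OmegaF F (extJ Jᶜ h)) ≤
        lam * eta / 2 * OmegaF (Fcontract F J) h :=
      mul_le_mul_of_nonneg_left (rho_mul_omega_le S.good hJ h) (by positivity)
    linarith

end Events

/-- support recovery. Under the irrepresentability-type condition, for
`λ ≤ κν/(2c(J))` the regularized least-squares minimizer is unique with support exactly `J`,
with probability at least `1 − 3 P(Ω*(z) > λ η ρ(J) √n / (2σ))`, where `z` is a centered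
Gaussian vector with covariance `Q = XᵀX/n` (realized as `z = R g`, `R Rᵀ = Q`, `g` standard
Gaussian, and the noise `ε` is a standard Gaussian vector in `ℝ^n`). -/
theorem omega_support_recovery {p n : ℕ} (hp : 1 ≤ p) (hn : 1 ≤ n)
    (F : Finset (Fin p) → ℝ)
    (hsubm : Submodular F) (hmono : MonotoneF F) (hF0 : F ∅ = 0)
    (hFpos : ∀ k : Fin p, 0 < F {k})
    (X : Matrix (Fin n) (Fin p) ℝ) (wstar : Fin p → ℝ) (sigma : ℝ) (hsigma : 0 < sigma)
    (Q : Matrix (Fin p) (Fin p) ℝ) (hQ : Q = ((n : ℝ)⁻¹) • (X.transpose * X))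
    (J : Finset (Fin p)) (hJstable : StableSet F J) (hJsupp : suppF wstar ⊆ J)
    (hJmin : ∀ J' : Finset (Fin p), StableSet F J' → suppF wstar ⊆ J' → J ⊆ J')
    (nu : ℝ) (hnu : IsLeast {x : ℝ | ∃ j : Fin p, wstar j ≠ 0 ∧ x = |wstar j|} nu)
    (hnupos : 0 < nu)
    (kappa : ℝ)
    (hkappa : IsGreatest {c : ℝ | ∀ x : {j : Fin p // j ∈ J} → ℝ,
        c * (∑ i, x i ^ 2) ≤ ∑ i, ∑ j, x i *
          Q.submatrix (Subtype.val : {j : Fin p // j ∈ J} → Fin p) Subtype.val i j * x j} kappa)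
    (hkappapos : 0 < kappa)
    (eta : ℝ) (heta : 0 < eta)
    (hcond : dualNorm (OmegaF (Fcontract F J))
        (fun j : {x : Fin p // x ∈ Jᶜ} =>
          OmegaF (Frestrict F J)
            (((Q.submatrix (Subtype.val : {j : Fin p // j ∈ J} → Fin p) Subtype.val)⁻¹).mulVec
              (fun i : {j : Fin p // j ∈ J} => Q i.1 j.1))) ≤ 1 - eta)
    (lam : ℝ) (hlam : 0 < lam) (hlamle : lam ≤ kappa * nu / (2 * cJ F J))
    (R : Matrix (Fin p) (Fin p) ℝ) (hR : R * R.transpose = Q) :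
    1 - 3 * (Measure.map (fun g => R.mulVec g) (stdGaussianPi p))
          {z : Fin p → ℝ |
            lam * eta * rhoJ F J * Real.sqrt n / (2 * sigma) < dualNorm (OmegaF F) z}
      ≤ (stdGaussianPi n)
          {ε : Fin n → ℝ | ∃ w : Fin p → ℝ,
            (∀ w' : Fin p → ℝ,
              lsObj F X lam (fun i => X.mulVec wstar i + sigma * ε i) w ≤
                lsObj F X lam (fun i => X.mulVec wstar i + sigma * ε i) w') ∧
            (∀ w'' : Fin p → ℝ,
              (∀ w' : Fin p → ℝ,
                lsObj F X lam (fun i => X.mulVec wstar i + sigma * ε i) w'' ≤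
                  lsObj F X lam (fun i => X.mulVec wstar i + sigma * ε i) w') → w'' = w) ∧
            suppF w = J} := by
  have hn0 : (0 : ℝ) < n := by exact_mod_cast hn
  have hF : Good F := ⟨hsubm, hmono, hF0, hFpos⟩
  have hQs : Q.transpose = Q := by
    rw [hQ, Matrix.transpose_smul, Matrix.transpose_mul, Matrix.transpose_transpose]
  have hstar : SuppIn J wstar := by
    intro i hi
    by_contra hc
    exact hi (hJsupp (by simpa [suppF] using hc))
  have S : Setup F Q J wstar lam kappa := by
    refine ⟨hF, hQs, fun x => ?_, hkappapos, fun x hx => ?_, hlam, hstar⟩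
    · rw [← hR, ← Matrix.mulVec_mulVec, Matrix.dotProduct_mulVec, ← Matrix.mulVec_transpose]
      exact Finset.sum_nonneg fun i _ => mul_self_nonneg _
    · have h := hkappa.1 fun i => x i.1
      have h1 : x ⬝ᵥ x = ∑ i : {j : Fin p // j ∈ J}, x i.1 ^ 2 := by
        conv_lhs => rw [← extJ_restrict hx]
        simp only [dotProduct]
        rw [sum_extJ_mul, extJ_restrict hx]
        exact Finset.sum_congr rfl fun i _ => (sq _).symm
      have h2 : x ⬝ᵥ Q.mulVec x = ∑ i : {j : Fin p // j ∈ J}, ∑ j : {j : Fin p // j ∈ J},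
          x i.1 * Q i.1 j.1 * x j.1 := by
        rw [dotProduct_comm]
        conv_lhs => rw [← extJ_restrict hx]
        simp only [dotProduct]
        rw [sum_extJ_mul]
        refine Finset.sum_congr rfl fun i _ => ?_
        rw [mulVec_extJ, mul_comm]
        simp only [Matrix.mulVec, dotProduct, Finset.mul_sum, Matrix.submatrix_apply]
        exact Finset.sum_congr rfl fun j _ => by ring
      rw [h1, h2]
      exact h
  have hG := good_contract hF hJstable
  have heta1 : eta ≤ 1 := by
    linarith [(dualNorm_nonneg hG _).trans hcond]
  have hcond' : ∀ h : {x : Fin p // x ∈ Jᶜ} → ℝ,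
      ∑ j, OmegaF F ((extInv Q J).mulVec fun i => Q i j.1) * h j
        ≤ (1 - eta) * OmegaF (Fcontract F J) h := by
    intro h
    simp_rw [extInv_mulVec, ← omega_restrict hF]
    exact (sum_mul_le_dualNorm hG _ h).trans
      (mul_le_mul_of_nonneg_right hcond (omega_nonneg hG h))
  -- If `c(J) ≤ 0`, the bound on `lam` would be nonpositive, division by zero being zero.
  have hcpos : 0 < cJ F J := by
    by_contra hc
    have : kappa * nu / (2 * cJ F J) ≤ 0 :=
      div_nonpos_of_nonneg_of_nonpos (by positivity) (by linarith)
    linarith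
  have hlam' : lam * (2 * cJ F J) ≤ kappa * nu := (le_div_iff₀ (by positivity)).1 hlamle
  have hnu' : ∀ j, wstar j ≠ 0 → nu ≤ |wstar j| := fun j hj => hnu.2 ⟨j, hj, rfl⟩
  have hs0 : 0 < Real.sqrt n := Real.sqrt_pos.2 hn0
  have hss : Real.sqrt n * Real.sqrt n = n := Real.mul_self_sqrt hn0.le
  set τ := lam * eta * rhoJ F J * Real.sqrt n / (2 * sigma) with hτ
  set bad : Set (Fin p → ℝ) := {z | τ < dualNorm (OmegaF F) z} with hbad
  have hbadm : MeasurableSet bad := (isOpen_lt_dualNorm hF τ).measurableSet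
  let Z : Matrix (Fin p) (Fin n) ℝ := (Real.sqrt n)⁻¹ • X.transpose
  let H : Matrix (Fin p) (Fin p) ℝ := 1 - (2 : ℝ) • (Q * extInv Q J)
  have hZ : Z * Z.transpose = Q := by
    simp only [Z]
    rw [Matrix.transpose_smul, Matrix.transpose_transpose, Matrix.smul_mul, Matrix.mul_smul,
      smul_smul, ← mul_inv, hss, ← hQ]
  have hHZ : (H * Z) * (H * Z).transpose = Q := by
    rw [Matrix.transpose_mul, Matrix.mul_assoc, ← Matrix.mul_assoc Z, hZ, ← Matrix.mul_assoc]
    exact S.reflection_mul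
  -- Both `Z ε` and its reflection `H Z ε` are centered Gaussian with covariance `Q`.
  have hmeas : ∀ A : Matrix (Fin p) (Fin n) ℝ, A * A.transpose = Q →
      stdGaussianPi n {ε | A.mulVec ε ∈ bad} =
        Measure.map (fun g => R.mulVec g) (stdGaussianPi p) bad := by
    intro A hA
    have hAm : Measurable fun g : Fin n → ℝ => A.mulVec g :=
      (Matrix.mulVecLin A).continuous_of_finiteDimensional.measurable
    rw [← map_stdGaussianPi_eq A R (hA.trans hR.symm), Measure.map_apply hAm hbadm]
    rfl
  set P := Measure.map (fun g => R.mulVec g) (stdGaussianPi p) bad with hP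
  let exc : Set (Fin n → ℝ) := ⋃ k ∈ J, {ε | ∃ v,
    IsMinIn F Q wstar lam (J.erase k) (noiseCorr X sigma ε) v ∧
      grad Q wstar (noiseCorr X sigma ε) v k = 0}
  have hexc : stdGaussianPi n exc = 0 :=
    (measure_biUnion_null_iff J.countable_toSet).2 fun k hk =>
      S.null_exceptional hn hQ hsigma hk
  set good : Set (Fin n → ℝ) := _
  change 1 - 3 * P ≤ stdGaussianPi n good
  have hsub : Set.univ ⊆ good ∪ ({ε | Z.mulVec ε ∈ bad} ∪ {ε | (H * Z).mulVec ε ∈ bad} ∪ exc) := by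
    intro ε _
    by_contra hε
    simp only [Set.mem_union, not_or] at hε
    obtain ⟨hgood, ⟨hz, hz'⟩, hx⟩ := hε
    refine hgood ?_
    have hcorr : noiseCorr X sigma ε = (sigma / Real.sqrt n) • Z.mulVec ε := by
      simp only [noiseCorr, Z]
      rw [Matrix.smul_mulVec, smul_smul]
      rw [← div_eq_mul_inv, div_div, hss]
    have hcτ : sigma / Real.sqrt n * τ = lam * eta * rhoJ F J / 2 := by
      rw [hτ]
      field_simp
    obtain ⟨w, hw, hsupp⟩ := S.recovery_of_dualNorm hJstable hJmin hnupos hnu' hlam' heta heta1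
      hcond' (by positivity) hcτ hcorr (not_lt.1 hz)
      (by rw [Matrix.mulVec_mulVec]; exact not_lt.1 hz')
      (fun k hk v hv h0 => hx (Set.mem_biUnion (s := (J : Set (Fin p))) hk ⟨v, hv, h0⟩))
    refine ⟨w, fun w' => ?_, fun w'' hw'' => ?_, hsupp⟩
    · rw [lsObj_eq hn hQ, lsObj_eq hn hQ]
      by_cases h : w' = w
      · rw [h]
      · linarith [hw w' h]
    · by_contra h
      have h1 := hw'' w
      rw [lsObj_eq hn hQ, lsObj_eq hn hQ] at h1
      linarith [hw w'' h]
  rw [tsub_le_iff_right]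
  calc (1 : ENNReal) = stdGaussianPi n Set.univ := measure_univ.symm
    _ ≤ stdGaussianPi n good + (P + P + 0) := by
      refine (measure_mono hsub).trans ((measure_union_le _ _).trans ?_)
      gcongr
      refine (measure_union_le _ _).trans ?_
      rw [hexc]
      gcongr
      refine (measure_union_le _ _).trans ?_
      rw [hmeas Z hZ, hmeas (H * Z) hHZ]
    _ ≤ stdGaussianPi n good + 3 * P := by
      gcongr
      rw [add_zero, ← two_mul]
      gcongr
      norm_num
end
end

section
/- For every s ∈ ℝ^p, sup{ s^⊤w − F(Supp(w)) : w ∈ ℝ^p, ‖w‖_∞ ≤ 1 } = max_{A ⊆ V} ( ‖s_A‖_1 − F(A) ); that is, the Fenchel conjugate of g(w) = F(Supp(w)) restricted to the unit ℓ∞-ball equals the maximum over subsets A of ‖s_A‖_1 − F(A). -/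
/-!
Fix a support `A`. On the unit `ℓ∞`-ball each coordinate satisfies `s i * w i ≤ |s i|`, so a vector
with support `A` contributes at most `‖s_A‖₁ - F A`. Conversely, the vector equal to the sign of `s`
on `A` and to `0` elsewhere satisfies `⟨s, w⟩ = ‖s_A‖₁`; its support may be smaller than `A` (where
`s` vanishes), but monotonicity of `F` shows that this can only increase the objective. Finitely
many sets `A` are involved, so the maximum is attained.
-/

open Finset MeasureTheory
open scoped Classical NNReal

noncomputable section

/-- the Fenchel conjugate of `g(w) = F(Supp w)` on the unit `ℓ∞`-ball is
`s ↦ max_{A ⊆ V} (‖s_A‖₁ − F(A))`: the sup over the ball equals this attained maximum. -/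
theorem conjugate_support_function {p : ℕ} (hp : 1 ≤ p) (F : Finset (Fin p) → ℝ)
    (hsubm : Submodular F) (hmono : MonotoneF F) (hF0 : F ∅ = 0)
    (hFpos : ∀ k : Fin p, 0 < F {k}) (s : Fin p → ℝ) :
    ∃ m : ℝ,
      IsGreatest {x : ℝ | ∃ A : Finset (Fin p), x = (∑ k ∈ A, |s k|) - F A} m ∧
      IsLUB {x : ℝ | ∃ w : Fin p → ℝ, (∀ i, |w i| ≤ 1) ∧
        x = (∑ i, s i * w i) - F (suppF w)} m := by
  obtain ⟨A, -, hA⟩ := Finset.exists_max_image (Finset.univ : Finset (Finset (Fin p)))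
    (fun A => (∑ k ∈ A, |s k|) - F A) Finset.univ_nonempty
  refine ⟨(∑ k ∈ A, |s k|) - F A, ⟨⟨A, rfl⟩, ?_⟩, ?_, ?_⟩
  · rintro x ⟨B, rfl⟩
    exact hA B (Finset.mem_univ B)
  · rintro x ⟨w, hw, rfl⟩
    have hle : ∑ i, s i * w i ≤ ∑ i ∈ suppF w, |s i| := by
      rw [suppF, Finset.sum_filter]
      refine Finset.sum_le_sum fun i _ => ?_
      split_ifs with h
      · calc s i * w i ≤ |s i| * |w i| := (le_abs_self _).trans (abs_mul _ _).le
          _ ≤ |s i| := mul_le_of_le_one_right (abs_nonneg _) (hw i)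
      · simp [not_not.mp h]
    have := hA (suppF w) (Finset.mem_univ _)
    linarith
  · intro b hb
    let w : Fin p → ℝ := fun i => if i ∈ A then (SignType.sign (s i) : ℝ) else 0
    have hw : ∀ i, |w i| ≤ 1 := by
      intro i
      by_cases h : i ∈ A
      · simp only [w, if_pos h]
        cases SignType.sign (s i) <;> simp
      · simp [w, h]
    have hsum : ∑ i, s i * w i = ∑ i ∈ A, |s i| := by
      simp [w, mul_ite, self_mul_sign]
    have hsub : suppF w ⊆ A := by
      intro i hi
      by_contra h
      simp [suppF, w, h] at hi
    have hF := hmono hsub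
    have := hb ⟨w, hw, rfl⟩
    linarith
end
end

section
/- Let 𝒢 be a finite collection of subsets of V and d : 𝒢 → ℝ_+ nonnegative weights with ∪{G ∈ 𝒢 : d(G) > 0} = V. Then the set-function F(A) = Σ_{G ∈ 𝒢 : G ∩ A ≠ ∅} d(G) is nondecreasing and submodular with F(∅) = 0, and the associated function Ω(w) = f(|w|) (with f the Lovász extension of F) satisfies Ω(w) = Σ_{G ∈ 𝒢} d(G) ‖w_G‖_∞ for every w ∈ ℝ^p, where ‖w_G‖_∞ = max_{j∈G} |w_j|. -/
/-!
Both sides are linear in the weights, so everything reduces to a single group `g`, whose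
set-function is `A ↦ 1` if `g` meets `A` and `0` otherwise. Monotonicity and submodularity of
this indicator are elementary, and nonnegativity of `d` carries them over to `F`.
For the Lovász extension, the increments of the indicator along a decreasing ordering of `|w|`
vanish except at the first index `m` whose element belongs to `g`, where the increment is `1`;
since the ordering is decreasing, the value of `|w|` there is the maximum of `|w|` over `g`
(`sum_increment_eq_sSup`). For `g = ∅` both the sum and `sSup ∅` are `0`.
-/

open Finset MeasureTheory
open scoped Classical NNReal

noncomputable section

/-- The indicator that the group `g` meets the set `A`: the set-function of one group of weight
`1`. -/
def meets {α : Type*} [DecidableEq α] (g A : Finset α) : ℝ :=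
  if (g ∩ A).Nonempty then 1 else 0

theorem meets_mono {α : Type*} [DecidableEq α] (g : Finset α) {A B : Finset α} (h : A ⊆ B) :
    meets g A ≤ meets g B := by
  unfold meets
  by_cases hA : (g ∩ A).Nonempty
  · have hB : (g ∩ B).Nonempty := hA.mono (Finset.inter_subset_inter_left h)
    simp [hA, hB]
  · rw [if_neg hA]
    split_ifs <;> norm_num

theorem meets_submodular {α : Type*} [DecidableEq α] (g A B : Finset α) :
    meets g (A ∪ B) + meets g (A ∩ B) ≤ meets g A + meets g B := by
  have hA : meets g (A ∩ B) ≤ meets g A := meets_mono g Finset.inter_subset_left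
  have hB : meets g (A ∩ B) ≤ meets g B := meets_mono g Finset.inter_subset_right
  -- A group meeting `A ∪ B` meets `A` or `B`, so `meets g (A ∪ B)` is one of the summands.
  have hU : meets g (A ∪ B) = meets g A ∨ meets g (A ∪ B) = meets g B := by
    unfold meets
    simp only [Finset.inter_union_distrib_left, Finset.union_nonempty]
    by_cases h1 : (g ∩ A).Nonempty <;> by_cases h2 : (g ∩ B).Nonempty <;> simp [h1, h2]
  rcases hU with h | h <;> linarith

/-- Lovász extension of the indicator of one group, along any ordering `τ` that is decreasing
for `v`: the only nonzero increment occurs at the first element of `g`. -/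
theorem sum_increment_eq_sSup {α : Type*} [DecidableEq α] {n : ℕ} (τ : Fin n ≃ α) (v : α → ℝ)
    (hv : Antitone fun k => v (τ k)) (g : Finset α) :
    ∑ k : Fin n, v (τ k) *
      (meets g ((Finset.univ.filter (fun j => j ≤ k)).image (fun j => τ j)) -
       meets g ((Finset.univ.filter (fun j => j < k)).image (fun j => τ j))) =
      sSup (v '' (g : Set α)) := by
  rcases g.eq_empty_or_nonempty with rfl | ⟨a, ha⟩
  · simp [meets]
  -- `m` is the first index in the ordering whose element lies in `g`.
  have hne : (Finset.univ.filter (fun k => τ k ∈ g)).Nonempty := ⟨τ.symm a, by simpa using ha⟩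
  obtain ⟨m, hm, hmin⟩ : ∃ m, τ m ∈ g ∧ ∀ k, τ k ∈ g → m ≤ k :=
    ⟨_, (Finset.mem_filter.1 (Finset.min'_mem _ hne)).2,
      fun k hk => Finset.min'_le _ k (by simpa using hk)⟩
  have hle : ∀ k, meets g ((Finset.univ.filter (fun j => j ≤ k)).image (fun j => τ j)) =
      if m ≤ k then 1 else 0 := by
    intro k
    refine if_congr ⟨?_, fun h => ⟨τ m, ?_⟩⟩ rfl rfl
    · rintro ⟨x, hx⟩
      simp only [Finset.mem_inter, Finset.mem_image, Finset.mem_filter, Finset.mem_univ,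
        true_and] at hx
      obtain ⟨hx, j, hj, rfl⟩ := hx
      exact (hmin j hx).trans hj
    · simpa [hm] using h
  have hlt : ∀ k, meets g ((Finset.univ.filter (fun j => j < k)).image (fun j => τ j)) =
      if m < k then 1 else 0 := by
    intro k
    refine if_congr ⟨?_, fun h => ⟨τ m, ?_⟩⟩ rfl rfl
    · rintro ⟨x, hx⟩
      simp only [Finset.mem_inter, Finset.mem_image, Finset.mem_filter, Finset.mem_univ,
        true_and] at hx
      obtain ⟨hx, j, hj, rfl⟩ := hx
      exact (hmin j hx).trans_lt hj
    · simpa [hm] using h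
  have hmax : IsGreatest (v '' (g : Set α)) (v (τ m)) := by
    refine ⟨⟨τ m, hm, rfl⟩, ?_⟩
    rintro _ ⟨x, hx, rfl⟩
    have := hv (hmin (τ.symm x) (by simpa using hx))
    simpa using this
  rw [hmax.csSup_eq, Finset.sum_eq_single m]
  · rw [hle, hlt]
    simp
  · intro k _ hk
    rw [hle, hlt]
    rcases lt_or_gt_of_ne hk with h | h
    · simp [not_le.2 h, h.not_gt]
    · simp [h, h.le]
  · simp

/-- overlapping group norms: for nonnegative group weights `d` whose positive
groups cover `V`, the set-function `F(A) = ∑_{G : G ∩ A ≠ ∅} d(G)` is nondecreasing and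
submodular with `F(∅) = 0`, and the associated `Ω` is the grouped `ℓ∞`-norm
`Ω(w) = ∑_G d(G) ‖w_G‖_∞`. -/
theorem omega_group_norm {p : ℕ} (hp : 1 ≤ p)
    (G : Finset (Finset (Fin p))) (d : Finset (Fin p) → ℝ)
    (hd : ∀ g ∈ G, 0 ≤ d g)
    (hcov : ∀ j : Fin p, ∃ g ∈ G, 0 < d g ∧ j ∈ g) :
    MonotoneF (fun A : Finset (Fin p) =>
      ∑ g ∈ G.filter (fun g => (g ∩ A).Nonempty), d g) ∧
    Submodular (fun A : Finset (Fin p) =>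
      ∑ g ∈ G.filter (fun g => (g ∩ A).Nonempty), d g) ∧
    (∑ g ∈ G.filter (fun g => (g ∩ (∅ : Finset (Fin p))).Nonempty), d g) = 0 ∧
    ∀ w : Fin p → ℝ,
      OmegaF (fun A : Finset (Fin p) => ∑ g ∈ G.filter (fun g => (g ∩ A).Nonempty), d g) w =
        ∑ g ∈ G, d g * sSup ((fun j => |w j|) '' (g : Set (Fin p))) := by
  have key : ∀ A : Finset (Fin p),
      ∑ g ∈ G.filter (fun g => (g ∩ A).Nonempty), d g = ∑ g ∈ G, d g * meets g A := by
    intro A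
    rw [Finset.sum_filter]
    refine Finset.sum_congr rfl fun g _ => ?_
    by_cases h : (g ∩ A).Nonempty <;> simp [meets, h]
  refine ⟨fun A B h => ?_, fun A B => ?_, by simp, fun w => ?_⟩
  · simp only [key]
    exact Finset.sum_le_sum fun g hg => mul_le_mul_of_nonneg_left (meets_mono g h) (hd g hg)
  · simp only [key]
    rw [← Finset.sum_add_distrib, ← Finset.sum_add_distrib]
    refine Finset.sum_le_sum fun g hg => ?_
    rw [← mul_add, ← mul_add]
    exact mul_le_mul_of_nonneg_left (meets_submodular g A B) (hd g hg)
  · simp only [key, OmegaF, lovasz]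
    set e : Fin (Fintype.card (Fin p)) ≃ Fin p := (Fintype.equivFin (Fin p)).symm
    set σ := Tuple.sort (fun i => -|w (e i)|)
    have hanti : Antitone fun k => |w ((σ.trans e) k)| := fun i j hij =>
      neg_le_neg_iff.1 (Tuple.monotone_sort (fun i => -|w (e i)|) hij)
    -- Exchange the sums over indices and groups to treat one group at a time.
    simp only [← Finset.sum_sub_distrib, Finset.mul_sum]
    rw [Finset.sum_comm]
    refine Finset.sum_congr rfl fun g _ => ?_
    rw [← sum_increment_eq_sSup (σ.trans e) (fun j => |w j|) hanti g, Finset.mul_sum]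
    refine Finset.sum_congr rfl fun k _ => ?_
    simp only [Equiv.trans_apply]
    ring
end
end

section
/- For every J ⊆ V and every x ∈ ℝ^p, Ω(x) ≥ Ω_J(x_J) + Ω^J(x_{J^c}) ≥ Ω_J(x_J) + ρ(J) Ω_{J^c}(x_{J^c}) ≥ ρ(J) Ω(x), where Ω_{J^c} is the norm on ℝ^{J^c} associated with the restriction F_{J^c}. -/
/-!
The Lovász extension has a layer-cake representation: if `G ∅ = 0` and `0 ≤ w ≤ M`, then
`lovasz G w = ∫ t in [0, M), G {i | t < w i}` (`lovasz_layer_cake`). Indeed the superlevel set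
`{i | t < w i}` is a prefix of the decreasing ordering, so its `G`-value is the telescoping sum of
the increments `G {j₁,…,jₖ} - G {j₁,…,jₖ₋₁}` over those `k` with `t < w jₖ`, and integrating the
indicator of `t < w jₖ` over `[0, M)` gives `w jₖ`.

All four terms of the chain thus become integrals of set-functions of the single set
`A = {i | t < |x i|}`, and the inequalities hold pointwise in `t`:
* `F (A ∩ J) + (F (A ∪ J) - F J) ≤ F A` is submodularity for `A` and `J`;
* `ρ(J) F (A ∩ Jᶜ) ≤ F (A ∪ J) - F J` is the definition of `ρ(J)`;
* `ρ(J) F A ≤ F (A ∩ J) + ρ(J) F (A ∩ Jᶜ)` is subadditivity together with `0 ≤ ρ(J) ≤ 1`.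
-/

open Finset MeasureTheory
open scoped Classical NNReal

noncomputable section

/-- Telescoping of the increments of `H` along a lower set. -/
lemma sum_increments_lowerSet {n : ℕ} (H : Finset (Fin n) → ℝ) (S : Finset (Fin n)) :
    (∀ a ∈ S, ∀ b, b ≤ a → b ∈ S) →
      ∑ k ∈ S, (H (univ.filter (fun j => j ≤ k)) - H (univ.filter (fun j => j < k))) =
        H S - H ∅ := by
  induction S using Finset.induction_on_max with
  | empty => intro _; simp
  | insert a s hlt ih =>
    intro hS
    have ha : a ∉ s := fun h => lt_irrefl _ (hlt a h)
    have mem_s : ∀ b, b ∈ s ↔ b < a := by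
      intro b
      refine ⟨hlt b, fun hb => ?_⟩
      rcases Finset.mem_insert.1 (hS a (Finset.mem_insert_self _ _) b hb.le) with h | h
      · exact absurd h hb.ne
      · exact h
    have h1 : univ.filter (fun j => j < a) = s := by ext b; simp [mem_s]
    have h2 : univ.filter (fun j => j ≤ a) = insert a s := by
      ext b; simp [mem_s, le_iff_eq_or_lt]
    rw [Finset.sum_insert ha, h1, h2,
      ih (fun c hc b hb => (mem_s b).2 (hb.trans_lt (hlt c hc)))]
    ring

/-- The layer-cake formula for the Lovász extension, with integrability of the integrand. -/
lemma lovasz_layer_cake {α : Type*} [Fintype α] [DecidableEq α] (G : Finset α → ℝ)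
    (hG : G ∅ = 0) (w : α → ℝ) (M : ℝ) (h0 : ∀ i, 0 ≤ w i) (hM : ∀ i, w i ≤ M) :
    IntegrableOn (fun t : ℝ => G (univ.filter (fun i => t < w i))) (Set.Ico 0 M) ∧
      ∫ t in Set.Ico 0 M, G (univ.filter (fun i => t < w i)) = lovasz G w := by
  set e : Fin (Fintype.card α) ≃ α := (Fintype.equivFin α).symm with he
  set σ : Equiv.Perm (Fin (Fintype.card α)) := Tuple.sort (fun i => -(w (e i))) with hσ
  have hanti : ∀ a b, b ≤ a → w (e (σ a)) ≤ w (e (σ b)) := by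
    intro a b hab
    have := Tuple.monotone_sort (fun i => -(w (e i))) hab
    simp only [Function.comp_apply] at this
    linarith
  let c : Fin (Fintype.card α) → ℝ := fun k =>
    G ((univ.filter (fun j => j ≤ k)).image (fun j => e (σ j))) -
      G ((univ.filter (fun j => j < k)).image (fun j => e (σ j)))
  have hpt : (fun t : ℝ => G (univ.filter (fun i => t < w i))) =
      fun t => ∑ k, (Set.Iio (w (e (σ k)))).indicator (fun _ => c k) t := by
    funext t
    have h := sum_increments_lowerSet (fun S => G (S.image (fun j => e (σ j))))
      (univ.filter (fun k => t < w (e (σ k)))) (by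
        intro a ha b hb
        simp only [mem_filter, mem_univ, true_and] at ha ⊢
        exact ha.trans_le (hanti a b hb))
    have himg : (univ.filter (fun k => t < w (e (σ k)))).image (fun j => e (σ j)) =
        univ.filter (fun i => t < w i) := by
      ext i
      simp only [mem_image, mem_filter, mem_univ, true_and]
      constructor
      · rintro ⟨k, hk, rfl⟩; exact hk
      · intro hi; exact ⟨σ.symm (e.symm i), by simpa using hi, by simp⟩
    simp only [himg, image_empty, hG, sub_zero] at h
    rw [← h, Finset.sum_filter]
    simp only [Set.indicator_apply, Set.mem_Iio, c]
  have hint : ∀ k, IntegrableOn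
      (fun t : ℝ => (Set.Iio (w (e (σ k)))).indicator (fun _ => c k) t) (Set.Ico 0 M) := by
    intro k
    refine Integrable.indicator ?_ measurableSet_Iio
    exact integrableOn_const (by simp)
  constructor
  · rw [hpt]
    exact integrable_finsetSum _ (fun k _ => hint k)
  · simp only [hpt]
    rw [integral_finsetSum _ (fun k _ => hint k)]
    have hl : lovasz G w = ∑ k, w (e (σ k)) * c k := rfl
    rw [hl]
    refine Finset.sum_congr rfl (fun k _ => ?_)
    rw [setIntegral_indicator measurableSet_Iio, Set.Ico_inter_Iio, min_eq_right (hM _)]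
    simp [h0]

/-- The superlevel set of `|x|` at height `t`. -/
def levelSet {p : ℕ} (x : Fin p → ℝ) (t : ℝ) : Finset (Fin p) :=
  univ.filter (fun i => t < |x i|)

lemma image_levelSet {p : ℕ} (J : Finset (Fin p)) (x : Fin p → ℝ) (t : ℝ) :
    (univ.filter (fun j : {i : Fin p // i ∈ J} => t < |x j.1|)).image Subtype.val =
      levelSet x t ∩ J := by
  ext i
  simp [levelSet, and_comm]

section Rho

variable {p : ℕ} {F : Finset (Fin p) → ℝ}

lemma pos_of_nonempty (hmono : MonotoneF F) (hFpos : ∀ k : Fin p, 0 < F {k})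
    {B : Finset (Fin p)} (hB : B.Nonempty) : 0 < F B := by
  obtain ⟨k, hk⟩ := hB
  exact (hFpos k).trans_le (hmono (Finset.singleton_subset_iff.2 hk))

lemma ratio_nonneg (hmono : MonotoneF F) (hF0 : F ∅ = 0) (J B : Finset (Fin p)) :
    0 ≤ (F (B ∪ J) - F J) / F B :=
  div_nonneg (sub_nonneg.2 (hmono Finset.subset_union_right))
    (hF0 ▸ hmono (Finset.empty_subset B))

lemma rhoJ_nonneg (hmono : MonotoneF F) (hF0 : F ∅ = 0) (J : Finset (Fin p)) :
    0 ≤ rhoJ F J := by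
  unfold rhoJ
  split_ifs
  · exact zero_le_one
  · refine Real.sInf_nonneg ?_
    rintro _ ⟨B, -, -, rfl⟩
    exact ratio_nonneg hmono hF0 J B

lemma rhoJ_le_ratio (hmono : MonotoneF F) (hF0 : F ∅ = 0) {J B : Finset (Fin p)}
    (hB : B.Nonempty) (hBJ : B ⊆ Jᶜ) : rhoJ F J ≤ (F (B ∪ J) - F J) / F B := by
  have hJ : J ≠ univ := by
    rintro rfl
    simp at hBJ
    simp [hBJ] at hB
  rw [rhoJ, if_neg hJ]
  refine csInf_le ⟨0, ?_⟩ ⟨B, hB, hBJ, rfl⟩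
  rintro _ ⟨B, -, -, rfl⟩
  exact ratio_nonneg hmono hF0 J B

lemma rhoJ_mul_le (hmono : MonotoneF F) (hF0 : F ∅ = 0) (hFpos : ∀ k : Fin p, 0 < F {k})
    {J B : Finset (Fin p)} (hBJ : B ⊆ Jᶜ) : rhoJ F J * F B ≤ F (B ∪ J) - F J := by
  rcases B.eq_empty_or_nonempty with rfl | hB
  · simp [hF0]
  · exact (le_div_iff₀ (pos_of_nonempty hmono hFpos hB)).1 (rhoJ_le_ratio hmono hF0 hB hBJ)

lemma rhoJ_le_one (hsubm : Submodular F) (hmono : MonotoneF F) (hF0 : F ∅ = 0)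
    (hFpos : ∀ k : Fin p, 0 < F {k}) (J : Finset (Fin p)) : rhoJ F J ≤ 1 := by
  by_cases hJ : J = univ
  · simp [rhoJ, hJ]
  · obtain ⟨k, hk⟩ : ∃ k, k ∉ J := by
      by_contra! h
      exact hJ (Finset.eq_univ_iff_forall.2 h)
    refine (rhoJ_le_ratio hmono hF0 (Finset.singleton_nonempty k) (by simpa using hk)).trans ?_
    rw [div_le_one (hFpos k)]
    have h1 := hsubm {k} J
    have h2 : F ∅ ≤ F ({k} ∩ J) := hmono (Finset.empty_subset _)
    linarith

end Rho

/-- for every `J ⊆ V` and `x ∈ ℝ^p`,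
`Ω(x) ≥ Ω_J(x_J) + Ω^J(x_{Jᶜ}) ≥ Ω_J(x_J) + ρ(J) Ω_{Jᶜ}(x_{Jᶜ}) ≥ ρ(J) Ω(x)`. -/
theorem omega_rho_chain {p : ℕ} (hp : 1 ≤ p) (F : Finset (Fin p) → ℝ)
    (hsubm : Submodular F) (hmono : MonotoneF F) (hF0 : F ∅ = 0)
    (hFpos : ∀ k : Fin p, 0 < F {k})
    (J : Finset (Fin p)) (x : Fin p → ℝ) :
    OmegaF (Frestrict F J) (fun j : {i : Fin p // i ∈ J} => x j.1) +
        OmegaF (Fcontract F J) (fun j : {i : Fin p // i ∈ Jᶜ} => x j.1) ≤ OmegaF F x ∧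
    OmegaF (Frestrict F J) (fun j : {i : Fin p // i ∈ J} => x j.1) +
        rhoJ F J * OmegaF (Frestrict F Jᶜ) (fun j : {i : Fin p // i ∈ Jᶜ} => x j.1) ≤
      OmegaF (Frestrict F J) (fun j : {i : Fin p // i ∈ J} => x j.1) +
        OmegaF (Fcontract F J) (fun j : {i : Fin p // i ∈ Jᶜ} => x j.1) ∧
    rhoJ F J * OmegaF F x ≤
      OmegaF (Frestrict F J) (fun j : {i : Fin p // i ∈ J} => x j.1) +
        rhoJ F J * OmegaF (Frestrict F Jᶜ) (fun j : {i : Fin p // i ∈ Jᶜ} => x j.1) := by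
  obtain ⟨M, hM⟩ : ∃ M, ∀ i, |x i| ≤ M :=
    ⟨∑ i, |x i|, fun i => Finset.single_le_sum (f := fun i => |x i|)
      (fun _ _ => abs_nonneg _) (Finset.mem_univ i)⟩
  obtain ⟨iV, eV⟩ := lovasz_layer_cake F hF0 (fun i => |x i|) M (fun _ => abs_nonneg _) hM
  have restr : ∀ K : Finset (Fin p),
      IntegrableOn (fun t => F (levelSet x t ∩ K)) (Set.Ico 0 M) ∧
        ∫ t in Set.Ico 0 M, F (levelSet x t ∩ K) =
          OmegaF (Frestrict F K) (fun j : {i : Fin p // i ∈ K} => x j.1) := by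
    intro K
    have h := lovasz_layer_cake (Frestrict F K) (by simp [Frestrict, hF0])
      (fun j : {i : Fin p // i ∈ K} => |x j.1|) M (fun _ => abs_nonneg _) (fun j => hM j.1)
    simpa only [OmegaF, Frestrict, image_levelSet] using h
  obtain ⟨iJ, eJ⟩ := restr J
  obtain ⟨iC, eC⟩ := restr Jᶜ
  have hun : ∀ A : Finset (Fin p), A ∩ Jᶜ ∪ J = A ∪ J := by
    intro A; ext i; simp only [mem_union, mem_inter, mem_compl]; tauto
  obtain ⟨iK, eK⟩ : IntegrableOn (fun t => F (levelSet x t ∪ J) - F J) (Set.Ico 0 M) ∧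
        ∫ t in Set.Ico 0 M, (F (levelSet x t ∪ J) - F J) =
          OmegaF (Fcontract F J) (fun j : {i : Fin p // i ∈ Jᶜ} => x j.1) := by
    have h := lovasz_layer_cake (Fcontract F J) (by simp [Fcontract])
      (fun j : {i : Fin p // i ∈ Jᶜ} => |x j.1|) M (fun _ => abs_nonneg _) (fun j => hM j.1)
    simpa only [OmegaF, Fcontract, image_levelSet, hun] using h
  change IntegrableOn (fun t => F (levelSet x t)) _ at iV
  change ∫ t in Set.Ico 0 M, F (levelSet x t) = OmegaF F x at eV
  rw [← eV, ← eJ, ← eC, ← eK]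
  have hr0 := rhoJ_nonneg hmono hF0 J
  have hr1 := rhoJ_le_one hsubm hmono hF0 hFpos J
  refine ⟨?_, ?_, ?_⟩
  · rw [← integral_add iJ iK]
    refine integral_mono (iJ.add iK) iV (fun t => ?_)
    have := hsubm (levelSet x t) J
    dsimp only
    linarith
  · rw [← integral_const_mul]
    refine add_le_add le_rfl (integral_mono (iC.const_mul _) iK (fun t => ?_))
    have := rhoJ_mul_le hmono hF0 hFpos (Finset.inter_subset_right : levelSet x t ∩ Jᶜ ⊆ Jᶜ)
    rwa [hun] at this
  · rw [← integral_const_mul, ← integral_const_mul, ← integral_add iJ (iC.const_mul _)]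
    refine integral_mono (iV.const_mul _) (iJ.add (iC.const_mul _)) (fun t => ?_)
    have hsub := hsubm (levelSet x t ∩ J) (levelSet x t ∩ Jᶜ)
    have h1 : levelSet x t ∩ J ∪ levelSet x t ∩ Jᶜ = levelSet x t := by
      rw [← Finset.inter_union_distrib_left]; simp
    have h2 : 0 ≤ F (levelSet x t ∩ J ∩ (levelSet x t ∩ Jᶜ)) :=
      hF0 ▸ hmono (Finset.empty_subset _)
    have h3 : 0 ≤ F (levelSet x t ∩ J) := hF0 ▸ hmono (Finset.empty_subset _)
    rw [h1] at hsub
    dsimp only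
    nlinarith [mul_le_mul_of_nonneg_left (show F (levelSet x t) ≤
      F (levelSet x t ∩ J) + F (levelSet x t ∩ Jᶜ) by linarith) hr0,
      mul_le_mul_of_nonneg_right hr1 h3]
end
end
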